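/- arXiv:1708.01807 — 6 statements merged into one kernel-verified Lean document; each statement's English description precedes it below -/
import Mathlib

section
/- Let K be an algebraically closed field of characteristic 0 containing the q-adic field ℚ_q, and let τ be a faithful irreducible representation of G over K. Then τ is realisable over the subfield ℚ_q(τ) of K generated over ℚ_q by the values of the character of τ if and only if p^n divides q−1. -/
/-!
Write `d = p ^ r`, `N = p ^ (n - r)`, and let `l` be an inverse of `j` modulo `q`. A faithful
irreducible `τ` has a basis `w, b w, …, b ^ (d - 1) w`, where `a w = ζ w` with `ζ` a primitive
`q`-th root of unity, and `b ^ d` acts as a primitive `N`-th root of unity `ω` (`exists_model`).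
The values of its character are zero or `ω ^ m * ∑ t < d, ζ ^ (i * l ^ t)` (`model_character`).

If `p ^ n ∣ q - 1`, then `ℚ_q` contains the eigenvalues of `b`, by Hensel's lemma
(`rootsOfUnity_mem_padic`). The characteristic polynomial of `a` is defined over `ℚ_q(τ)`, so the
`a`-orbit of an eigenvector of `b` spans a form of `τ` over `ℚ_q(τ)` (`exists_realisation`).

Conversely, let `L = ℚ_q(ω, ζ)` and let `s` be the automorphism of `L / ℚ_q(ω)` with
`s ζ = ζ ^ l`. It has order dividing `d` and fixes `ℚ_q(τ)`. A form of `τ` over `ℚ_q(τ)` makes `ω` a norm: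
`ω = x * s x * ⋯ * s ^ (d - 1) x` with `x ∈ L` (`exists_norm_equation`). This is the splitting
criterion for the cyclic algebra `(L, s, ω)`, obtained here by comparing eigenvectors. Since
`ℚ_q(ω)` is unramified and `L / ℚ_q(ω)` is totally ramified, `s` acts trivially on residues,
so `ω` is congruent to `x ^ d` and `d * N = p ^ n` divides `q ^ f - 1` whenever the residue field lies in
`𝔽_{q^f}` (`dvd_of_norm_eq`). For a suitable `f`, this forces `p ^ n ∣ q - 1`
(`exists_frobenius_exponent`); lifting the exponent is where `p` odd enters.

The ramification facts are proved by hand from two expansions with controlled absolute values: in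
powers of `ω` over `ℚ_q` (`exists_unramified_expansion`), and in powers of `ζ - 1` over `ℚ_q(ω)`
(`norm_term_le`). The absolute value on `L` is the spectral norm.
-/

open CategoryTheory Finset

/-! ### The group and its faithful irreducible representations -/

/-- Simplicity in the category `FDRep K G`, unfolded: there are no proper nonzero stable subspaces. -/
lemma FDRep.stable_eq_bot_or_top {K G : Type} [Field K] [Group G] (τ : FDRep K G) [Simple τ]
    (W : Submodule K τ) (hW : ∀ g, ∀ w ∈ W, τ.ρ g w ∈ W) : W = ⊥ ∨ W = ⊤ := by
  let σ : Representation K G W :=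
    { toFun := fun g => (τ.ρ g).restrict (hW g)
      map_one' := by ext; simp
      map_mul' := by intros; ext; simp }
  let i : FDRep.of σ ⟶ τ :=
    { hom := FGModuleCat.ofHom W.subtype
      comm := by
        intro g
        rfl }
  have hi : ∀ x : W, i.hom x = (x : τ) := fun x => rfl
  have : Mono i := by
    refine ConcreteCategory.mono_of_injective i ?_
    exact Subtype.val_injective
  by_cases h0 : i = 0
  · left
    rw [eq_bot_iff]
    intro x hx
    have h1 := hi ⟨x, hx⟩
    rw [h0] at h1
    exact h1.symm
  · right
    have : IsIso i := isIso_of_mono_of_nonzero h0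
    rw [eq_top_iff]
    intro x _
    let e := FDRep.isoToLinearEquiv (asIso i)
    have : x = e (e.symm x) := by simp
    rw [this]
    exact (e.symm x : W).2

section Grp
variable {G : Type} [Group G] [Fintype G] {a b : G} {j : ℕ}

omit [Fintype G] in
lemma conj_pow_pow (hba : b * a * b⁻¹ = a ^ j) (i : ℕ) : b * a ^ i = a ^ (j * i) * b := by
  have h : b * a ^ i * b⁻¹ = a ^ (j * i) := by
    rw [← conj_pow, hba, pow_mul]
  rw [← h]; group

lemma exists_eq_pow_mul_pow (hba : b * a * b⁻¹ = a ^ j)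
    (hgen : Subgroup.closure {a, b} = ⊤) (g : G) : ∃ i k : ℕ, g = a ^ i * b ^ k := by
  have hg : g ∈ Submonoid.closure {a, b} := by
    rw [← Subgroup.closure_toSubmonoid_of_finite, hgen]; trivial
  induction hg using Submonoid.closure_induction_left with
  | one => exact ⟨0, 0, by simp⟩
  | mul_left x hx y _ ih =>
    obtain ⟨i, k, rfl⟩ := ih
    rcases hx with rfl | hx
    · exact ⟨i + 1, k, by rw [pow_succ']; group⟩
    · rw [Set.mem_singleton_iff] at hx
      subst hx
      refine ⟨j * i, k + 1, ?_⟩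
      rw [← mul_assoc, conj_pow_pow hba, pow_succ' x k, mul_assoc]

omit [Fintype G] in
/-- When `l` inverts `j` modulo `q`, conjugation by `b⁻¹` raises `a` to the power `l`. So if `v` is a
`ζ`-eigenvector of `a`, then `b ^ t` moves it to a `ζ ^ (l ^ t)`-eigenvector. -/
lemma mul_pow_conj {l q : ℕ} (ha : orderOf a = q) (hba : b * a * b⁻¹ = a ^ j)
    (hjl : j * l ≡ 1 [MOD q]) (t : ℕ) (i : ℕ) : a ^ i * b ^ t = b ^ t * a ^ (i * l ^ t) := by
  induction t with
  | zero => simp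
  | succ t ih =>
    have key : ∀ m, a ^ m * b = b * a ^ (m * l) := by
      intro m
      rw [conj_pow_pow hba]
      congr 1
      rw [pow_eq_pow_iff_modEq, ha]
      calc m = m * 1 := by ring
        _ ≡ m * (j * l) [MOD q] := hjl.symm.mul_left m
        _ = j * (m * l) := by ring
    rw [pow_succ, ← mul_assoc, ih, mul_assoc, key, mul_assoc, ← mul_assoc, ← mul_assoc, ← pow_succ]
    congr 2
    ring
end Grp

/-- Explicit shape of a faithful irreducible representation. For an eigenvector `w` of `a`, with
eigenvalue a primitive `q`-th root of unity `ζ`, the translates `b ^ t w` with `t < d` are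
eigenvectors of `a` for distinct eigenvalues, and their span is stable because the central element
`b ^ d` acts as a scalar `ω`. Faithfulness makes `ω` a primitive `N`-th root of unity. -/
lemma exists_model {G : Type} [Group G] [Fintype G] {a b : G} {j l q d N : ℕ} [Fact q.Prime]
    (ha : orderOf a = q) (hb : orderOf b = d * N) (hd : 0 < d)
    (hba : b * a * b⁻¹ = a ^ j) (hjl : j * l ≡ 1 [MOD q]) (hl : orderOf (l : ZMod q) = d)
    (hgen : Subgroup.closure {a, b} = ⊤)
    {K V : Type} [Field K] [IsAlgClosed K] [AddCommGroup V] [Module K V] [FiniteDimensional K V]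
    (ρ : G →* V →ₗ[K] V) (hρ : Function.Injective ρ)
    (hirr : ∀ W : Submodule K V, (∀ g, ∀ w ∈ W, ρ g w ∈ W) → W = ⊥ ∨ W = ⊤) :
    ∃ (w : V) (ζ ω : K) (B : Module.Basis (Fin d) K V), IsPrimitiveRoot ζ q ∧ IsPrimitiveRoot ω N ∧
      ρ a w = ζ • w ∧ (∀ t, B t = ρ (b ^ (t : ℕ)) w) ∧ ∀ v, ρ (b ^ d) v = ω • v := by
  have hq : q.Prime := Fact.out
  have haq : a ^ q = 1 := by rw [← ha]; exact pow_orderOf_eq_one a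
  have ha1 : a ≠ 1 := by
    intro h; rw [h, orderOf_one] at ha; exact hq.one_lt.ne ha
  have hstab : ∀ W : Submodule K V, (∀ w ∈ W, ρ a w ∈ W) → (∀ w ∈ W, ρ b w ∈ W) →
      W = ⊥ ∨ W = ⊤ := by
    intro W h1 h2
    apply hirr
    intro g w hw
    obtain ⟨i, k, rfl⟩ := exists_eq_pow_mul_pow hba hgen g
    rw [map_mul, map_pow, map_pow, Module.End.mul_apply]
    have h3 : ∀ k : ℕ, ∀ w ∈ W, (ρ b ^ k) w ∈ W := by
      intro k
      induction k with
      | zero => intro w hw; simpa using hw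
      | succ k ih => intro w hw; rw [pow_succ', Module.End.mul_apply]; exact h2 _ (ih _ hw)
    have h4 : ∀ k : ℕ, ∀ w ∈ W, (ρ a ^ k) w ∈ W := by
      intro k
      induction k with
      | zero => intro w hw; simpa using hw
      | succ k ih => intro w hw; rw [pow_succ', Module.End.mul_apply]; exact h1 _ (ih _ hw)
    exact h4 _ _ (h3 _ _ hw)
  have hnt : Nontrivial V := by
    by_contra h
    rw [not_nontrivial_iff_subsingleton] at h
    exact ha1 (hρ (Subsingleton.elim _ _))
  have hcomm : ∀ i t v, ρ (a ^ i) (ρ (b ^ t) v) = ρ (b ^ t) (ρ (a ^ (i * l ^ t)) v) := by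
    intro i t v
    rw [← Module.End.mul_apply, ← map_mul, mul_pow_conj ha hba hjl, map_mul, Module.End.mul_apply]
  have hpw : ∀ {x : V} {c : K} (g : G), ρ g x = c • x → ∀ i : ℕ, ρ (g ^ i) x = c ^ i • x := by
    intro x c g h i
    induction i with
    | zero => simp
    | succ i ih => rw [pow_succ', map_mul, Module.End.mul_apply, ih, map_smul, h, smul_smul, pow_succ]
  obtain ⟨ζ, hζ⟩ := Module.End.exists_eigenvalue (ρ a)
  obtain ⟨w, hw⟩ := hζ.exists_hasEigenvector
  have haw : ρ a w = ζ • w := hw.apply_eq_smul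
  have hw0 : w ≠ 0 := hw.2
  have hζq : ζ ^ q = 1 := by
    have := hpw a haw q
    rw [haq, map_one, Module.End.one_apply] at this
    have h2 : (ζ ^ q - 1) • w = 0 := by rw [sub_smul, ← this, one_smul, sub_self]
    rcases smul_eq_zero.1 h2 with h | h
    · exact sub_eq_zero.1 h
    · exact absurd h hw0
  have hζ1 : ζ ≠ 1 := by
    rintro rfl
    rcases hstab (Module.End.eigenspace (ρ a) 1)
      (by
        intro x hx
        rw [Module.End.mem_eigenspace_iff] at hx
        rw [hx, one_smul, Module.End.mem_eigenspace_iff, hx])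
      (by
        intro x hx
        rw [Module.End.mem_eigenspace_iff] at hx ⊢
        have := hcomm 1 1 x
        rw [hpw a hx, pow_one, pow_one, one_pow, one_smul] at this
        rw [this, one_smul]) with h | h
    · have : w ∈ Module.End.eigenspace (ρ a) 1 := by rw [Module.End.mem_eigenspace_iff, haw]
      rw [h] at this
      exact hw0 this
    · refine ha1 (hρ ?_)
      ext x
      have : x ∈ Module.End.eigenspace (ρ a) 1 := h ▸ Submodule.mem_top
      rw [Module.End.mem_eigenspace_iff] at this
      rw [this, map_one, one_smul, Module.End.one_apply]
  have hζp : IsPrimitiveRoot ζ q := by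
    rw [← orderOf_eq_prime hζq hζ1]; exact IsPrimitiveRoot.orderOf ζ
  have hld : a ^ (l ^ d) = a := by
    have : l ^ d ≡ 1 [MOD q] := by
      rw [← ZMod.natCast_eq_natCast_iff]
      push_cast
      rw [← hl]; exact pow_orderOf_eq_one _
    conv_rhs => rw [← pow_one a]
    rw [pow_eq_pow_iff_modEq, ha]; exact this
  obtain ⟨ω, hω⟩ := Module.End.exists_eigenvalue (ρ (b ^ d))
  have hcω : ∀ v, ρ (b ^ d) v = ω • v := by
    rcases hstab (Module.End.eigenspace (ρ (b ^ d)) ω)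
      (by
        intro x hx
        rw [Module.End.mem_eigenspace_iff] at hx ⊢
        have := hcomm 1 d x
        rw [one_mul, hld, pow_one] at this
        rw [← this, hx, map_smul])
      (by
        intro x hx
        rw [Module.End.mem_eigenspace_iff] at hx ⊢
        rw [← Module.End.mul_apply, ← map_mul, ← pow_succ, pow_succ', map_mul,
          Module.End.mul_apply, hx, map_smul]) with h | h
    · exact absurd h hω
    · intro x
      have : x ∈ Module.End.eigenspace (ρ (b ^ d)) ω := h ▸ Submodule.mem_top
      rwa [Module.End.mem_eigenspace_iff] at this
  have hωk : ∀ k : ℕ, ω ^ k = 1 ↔ (b ^ d) ^ k = 1 := by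
    intro k
    constructor
    · intro h
      apply hρ
      ext x
      rw [hpw _ (hcω x), h, one_smul, map_one, Module.End.one_apply]
    · intro h
      have := hpw _ (hcω w) k
      rw [h, map_one, Module.End.one_apply] at this
      have h2 : (ω ^ k - 1) • w = 0 := by rw [sub_smul, ← this, one_smul, sub_self]
      rcases smul_eq_zero.1 h2 with h | h
      · exact sub_eq_zero.1 h
      · exact absurd h hw0
  have hord : orderOf (b ^ d) = N := by
    rw [orderOf_pow_of_dvd hd.ne' (by rw [hb]; exact dvd_mul_right _ _), hb,
      Nat.mul_div_cancel_left _ hd]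
  have hωp : IsPrimitiveRoot ω N := by
    refine ⟨(hωk N).2 (by rw [← hord]; exact pow_orderOf_eq_one _), ?_⟩
    intro k hk
    rw [← hord]
    exact orderOf_dvd_of_pow_eq_one ((hωk k).1 hk)
  have hev : ∀ t : ℕ, ρ a (ρ (b ^ t) w) = ζ ^ (l ^ t) • ρ (b ^ t) w := by
    intro t
    have := hcomm 1 t w
    rw [pow_one, one_mul, hpw a haw, map_smul] at this
    exact this
  have hne : ∀ t : ℕ, ρ (b ^ t) w ≠ 0 := by
    intro t h
    apply hw0
    have : ρ (b ^ t)⁻¹ (ρ (b ^ t) w) = w := by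
      rw [← Module.End.mul_apply, ← map_mul, inv_mul_cancel, map_one, Module.End.one_apply]
    rw [← this, h, map_zero]
  have hli : LinearIndependent K (fun t : Fin d => ρ (b ^ (t : ℕ)) w) := by
    refine Module.End.eigenvectors_linearIndependent' (ρ a) (fun t : Fin d => ζ ^ (l ^ (t : ℕ))) ?_ _
      (fun t => ⟨Module.End.mem_eigenspace_iff.2 (hev t), hne t⟩)
    intro t t' h
    have h := h
    simp only at h
    have h2 : l ^ (t : ℕ) ≡ l ^ (t' : ℕ) [MOD q] := by
      rw [hζp.eq_orderOf]; exact (hζp.isOfFinOrder hq.ne_zero).pow_eq_pow_iff_modEq.1 h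
    rw [← ZMod.natCast_eq_natCast_iff] at h2
    push_cast at h2
    have := pow_injOn_Iio_orderOf (x := (l : ZMod q)) (by rw [hl]; exact t.2) (by rw [hl]; exact t'.2) h2
    exact Fin.ext this
  have hsp : ⊤ ≤ Submodule.span K (Set.range (fun t : Fin d => ρ (b ^ (t : ℕ)) w)) := by
    have hmem : ∀ t, t < d → ρ (b ^ t) w ∈
        Submodule.span K (Set.range (fun t : Fin d => ρ (b ^ (t : ℕ)) w)) :=
      fun t ht => Submodule.subset_span ⟨⟨t, ht⟩, rfl⟩
    rcases hstab (Submodule.span K (Set.range (fun t : Fin d => ρ (b ^ (t : ℕ)) w)))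
      (by
        intro x hx
        refine Submodule.span_induction ?_ ?_ ?_ ?_ hx
        · rintro _ ⟨t, rfl⟩
          simp only
          rw [hev]
          exact Submodule.smul_mem _ _ (hmem t t.2)
        · simp
        · intro x y _ _ hx hy; rw [map_add]; exact add_mem hx hy
        · intro c x _ hx; rw [map_smul]; exact Submodule.smul_mem _ _ hx)
      (by
        intro x hx
        refine Submodule.span_induction ?_ ?_ ?_ ?_ hx
        · rintro _ ⟨t, rfl⟩
          simp only
          rw [← Module.End.mul_apply, ← map_mul, ← pow_succ']
          rcases Nat.lt_or_ge ((t : ℕ) + 1) d with h | h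
          · exact hmem _ h
          · have : (t : ℕ) + 1 = d := by omega
            rw [this, hcω]
            have h0 := hmem 0 hd
            rw [pow_zero, map_one, Module.End.one_apply] at h0
            exact Submodule.smul_mem _ _ h0
        · simp
        · intro x y _ _ hx hy; rw [map_add]; exact add_mem hx hy
        · intro c x _ hx; rw [map_smul]; exact Submodule.smul_mem _ _ hx) with h | h
    · have h0 := hmem 0 hd
      rw [h] at h0
      exact absurd h0 (hne 0)
    · rw [h]
  exact ⟨w, ζ, ω, Module.Basis.mk hli hsp, hζp, hωp, haw, fun t => by simp, hcω⟩

/-- The character of the model: it vanishes on `a ^ i * b ^ k` unless `d ∣ k`, and at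
`a ^ i * b ^ (d * m)` it is `ω ^ m` times the sum of the conjugates `ζ ^ (i * l ^ t)` of `ζ ^ i`. -/
lemma model_character {G : Type} [Group G] [Fintype G] {a b : G} {j l q d : ℕ}
    (ha : orderOf a = q) (hd : 0 < d)
    (hba : b * a * b⁻¹ = a ^ j) (hjl : j * l ≡ 1 [MOD q])
    (hgen : Subgroup.closure {a, b} = ⊤)
    {K V : Type} [Field K] [AddCommGroup V] [Module K V]
    (ρ : G →* V →ₗ[K] V) {w : V} {ζ ω : K} (B : Module.Basis (Fin d) K V)
    (haw : ρ a w = ζ • w) (hB : ∀ t, B t = ρ (b ^ (t : ℕ)) w) (hω : ∀ v, ρ (b ^ d) v = ω • v) :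
    (∀ i, LinearMap.trace K V (ρ (a ^ i)) = ∑ t ∈ range d, ζ ^ (i * l ^ t)) ∧
    ∀ g, LinearMap.trace K V (ρ g) = 0 ∨
      ∃ m i, LinearMap.trace K V (ρ g) = ω ^ m * ∑ t ∈ range d, ζ ^ (i * l ^ t) := by
  have hpw : ∀ {x : V} {c : K} (g : G), ρ g x = c • x → ∀ i : ℕ, ρ (g ^ i) x = c ^ i • x := by
    intro x c g h i
    induction i with
    | zero => simp
    | succ i ih => rw [pow_succ', map_mul, Module.End.mul_apply, ih, map_smul, h, smul_smul, pow_succ]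
  have haB : ∀ i (t : Fin d), ρ (a ^ i) (B t) = ζ ^ (i * l ^ (t : ℕ)) • B t := by
    intro i t
    rw [hB, ← Module.End.mul_apply, ← map_mul, mul_pow_conj ha hba hjl, map_mul,
      Module.End.mul_apply, hpw a haw, map_smul]
  have hbB : ∀ k (t : Fin d), ρ (b ^ k) (B t) =
      ω ^ ((k + t) / d) • B ⟨(k + t) % d, Nat.mod_lt _ hd⟩ := by
    intro k t
    rw [hB, hB, ← Module.End.mul_apply, ← map_mul, ← pow_add]
    conv_lhs => rw [← Nat.div_add_mod (k + t) d]
    rw [pow_add, map_mul, Module.End.mul_apply, pow_mul, hpw _ (hω _)]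
  have htr : ∀ g, LinearMap.trace K V (ρ g) = ∑ t : Fin d, B.repr (ρ g (B t)) t := by
    intro g
    rw [LinearMap.trace_eq_matrix_trace K B, Matrix.trace]
    simp [LinearMap.toMatrix_apply]
  have key : ∀ i m, LinearMap.trace K V (ρ (a ^ i * b ^ (d * m))) =
      ω ^ m * ∑ t ∈ range d, ζ ^ (i * l ^ t) := by
    intro i m
    rw [htr, Finset.mul_sum, Finset.sum_range]
    refine Finset.sum_congr rfl fun t _ => ?_
    rw [map_mul, Module.End.mul_apply, pow_mul, hpw _ (hω _), map_smul, haB]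
    simp
  refine ⟨fun i => ?_, fun g => ?_⟩
  · have := key i 0
    simpa using this
  · obtain ⟨i, k, rfl⟩ := exists_eq_pow_mul_pow hba hgen g
    by_cases hk : d ∣ k
    · obtain ⟨m, rfl⟩ := hk
      exact Or.inr ⟨m, i, key i m⟩
    · left
      rw [htr]
      refine Finset.sum_eq_zero fun t _ => ?_
      rw [map_mul, Module.End.mul_apply, hbB, map_smul, haB]
      have : (⟨(k + t) % d, Nat.mod_lt _ hd⟩ : Fin d) ≠ t := by
        intro h
        have h2 : (k + t) % d = t := congrArg Fin.val h
        have h3 : (k + t : ℕ) ≡ 0 + t [MOD d] := by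
          rw [Nat.ModEq, h2, zero_add, Nat.mod_eq_of_lt t.2]
        exact hk ((Nat.modEq_zero_iff_dvd).1 (Nat.ModEq.add_right_cancel' _ h3))
      simp [this]

/-! ### Descent to a field containing the roots of unity of order `p ^ n` -/

/-- Newton's identities: elementary symmetric functions of the `x t` lie in any subfield that contains
their power sums. -/
lemma esymm_mem {K : Type} [Field K] [CharZero K] (E : Subfield K) {d : ℕ} (x : Fin d → K)
    (hx : ∀ i : ℕ, ∑ t, x t ^ i ∈ E) (k : ℕ) :
    MvPolynomial.aeval x (MvPolynomial.esymm (Fin d) ℤ k) ∈ E := by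
  induction k using Nat.strong_induction_on with
  | _ k ih =>
    rcases Nat.eq_zero_or_pos k with rfl | hk
    · simp [one_mem]
    have h := congrArg (MvPolynomial.aeval x) (MvPolynomial.mul_esymm_eq_sum (Fin d) ℤ k)
    rw [map_mul, map_natCast] at h
    have hk0 : (k : K) ≠ 0 := by exact_mod_cast hk.ne'
    have h2 : MvPolynomial.aeval x (MvPolynomial.esymm (Fin d) ℤ k) = (k : K)⁻¹ *
      ((k : K) * MvPolynomial.aeval x (MvPolynomial.esymm (Fin d) ℤ k)) := by
      field_simp
    rw [h2, h]
    refine mul_mem (inv_mem (natCast_mem E k)) ?_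
    rw [map_mul, map_pow, map_neg, map_one, map_sum]
    refine mul_mem (pow_mem (neg_mem (one_mem E)) _) (sum_mem fun c hc => ?_)
    rw [map_mul, map_mul, map_pow, map_neg, map_one]
    refine mul_mem (mul_mem (pow_mem (neg_mem (one_mem E)) _) (ih _ (Finset.mem_filter.1 hc).2)) ?_
    simpa [MvPolynomial.psum] using hx c.2

/-- Consequently the monic polynomial with roots `x t` has coefficients in that subfield. -/
lemma prod_coeff_mem {K : Type} [Field K] [CharZero K] (E : Subfield K) {d : ℕ} (x : Fin d → K)
    (hx : ∀ i : ℕ, ∑ t, x t ^ i ∈ E) (k : ℕ) :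
    (∏ t, (Polynomial.X - Polynomial.C (x t))).coeff k ∈ E := by
  rcases Nat.lt_or_ge d k with h | h
  · rw [Polynomial.coeff_eq_zero_of_natDegree_lt]
    · exact zero_mem E
    · rw [Polynomial.natDegree_prod_of_monic _ _ (fun i _ => Polynomial.monic_X_sub_C _)]
      simpa using h
  · have := Multiset.prod_X_sub_C_coeff (Finset.univ.val.map x) (k := k) (by simpa using h)
    rw [Multiset.map_map] at this
    have h2 : (∏ t, (Polynomial.X - Polynomial.C (x t))) =
      (Multiset.map ((fun t => Polynomial.X - Polynomial.C t) ∘ x) univ.val).prod := rfl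
    rw [h2, this, ← MvPolynomial.aeval_esymm_eq_multiset_esymm (Fin d) ℤ]
    exact mul_mem (pow_mem (neg_mem (one_mem E)) _) (esymm_mem E x hx _)

/-- If `E` contains the values of the character on the powers of `a`, and the `M`-th roots of unity, then the
representation is defined over `E`. Pick an eigenvector `v` of `b`; its eigenvalue is in `E`. The
characteristic polynomial of `a` has coefficients in `E`, so the `E`-span of the `a ^ i v` with
`i < d` is `G`-stable, and by irreducibility it is an `E`-form of the representation. -/
lemma exists_realisation {G : Type} [Group G] [Fintype G] {a b : G} {j d M : ℕ}
    (hd : 0 < d) (hbM : b ^ M = 1)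
    (hba : b * a * b⁻¹ = a ^ j)
    (hgen : Subgroup.closure {a, b} = ⊤)
    {K V : Type} [Field K] [CharZero K] [IsAlgClosed K]
    [AddCommGroup V] [Module K V] [FiniteDimensional K V]
    (ρ : G →* V →ₗ[K] V)
    (hirr : ∀ W : Submodule K V, (∀ g, ∀ w ∈ W, ρ g w ∈ W) → W = ⊥ ∨ W = ⊤)
    (B : Module.Basis (Fin d) K V) (x : Fin d → K) (hB : ∀ t, ρ a (B t) = x t • B t)
    (E : Subfield K) (hx : ∀ i : ℕ, ∑ t, x t ^ i ∈ E) (hE : ∀ μ : K, μ ^ M = 1 → μ ∈ E) :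
    ∃ σ : G →* (Fin d → E) →ₗ[E] (Fin d → E),
      ∀ g, algebraMap E K (LinearMap.trace E _ (σ g)) = LinearMap.trace K V (ρ g) := by
  have hfr : Module.finrank K V = d := by simpa using Module.finrank_eq_card_basis B
  have hnt : Nontrivial V := Module.nontrivial_of_finrank_pos (R := K) (by omega)
  obtain ⟨μ, hμ⟩ := Module.End.exists_eigenvalue (ρ b)
  obtain ⟨v, hv⟩ := hμ.exists_hasEigenvector
  have hbv : ρ b v = μ • v := hv.apply_eq_smul
  have hv0 : v ≠ 0 := hv.2
  have hμE : μ ∈ E := by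
    apply hE
    have : ∀ k : ℕ, ρ (b ^ k) v = μ ^ k • v := by
      intro k
      induction k with
      | zero => simp
      | succ k ih =>
        rw [pow_succ', map_mul, Module.End.mul_apply, ih, map_smul, hbv, smul_smul, pow_succ]
    have := this M
    rw [hbM, map_one, Module.End.one_apply] at this
    have h2 : (μ ^ M - 1) • v = 0 := by rw [sub_smul, ← this, one_smul, sub_self]
    rcases smul_eq_zero.1 h2 with h | h
    · exact sub_eq_zero.1 h
    · exact absurd h hv0
  set P : Polynomial K := ∏ t, (Polynomial.X - Polynomial.C (x t)) with hP
  have hPdeg : P.natDegree = d := by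
    rw [hP, Polynomial.natDegree_prod_of_monic _ _ (fun i _ => Polynomial.monic_X_sub_C _)]
    simp
  have hPm : P.Monic := Polynomial.monic_prod_of_monic _ _ (fun i _ => Polynomial.monic_X_sub_C _)
  have hPa : Polynomial.aeval (ρ a) P = 0 := by
    apply B.ext
    intro t
    rw [hP, ← Finset.prod_erase_mul _ _ (Finset.mem_univ t), map_mul, Module.End.mul_apply]
    simp [hB]
  have hPv : ∀ u : V, ρ (a ^ d) u = - ∑ i ∈ range d, P.coeff i • ρ (a ^ i) u := by
    intro u
    have h : Polynomial.aeval (ρ a) P u = 0 := by rw [hPa]; rfl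
    rw [Polynomial.aeval_eq_sum_range, hPdeg, Finset.sum_range_succ, ← hPdeg,
      hPm.coeff_natDegree, hPdeg] at h
    rw [LinearMap.add_apply, LinearMap.sum_apply] at h
    rw [eq_neg_iff_add_eq_zero, add_comm, ← h]
    simp
  let S : Submodule E V := Submodule.span E (Set.range fun i : Fin d => ρ (a ^ (i : ℕ)) v)
  have hSd : ∀ i, i < d → ρ (a ^ i) v ∈ S := fun i hi => Submodule.subset_span ⟨⟨i, hi⟩, rfl⟩
  have hcE : ∀ c : K, c ∈ E → ∀ u ∈ S, c • u ∈ S := fun c hc u hu => S.smul_mem ⟨c, hc⟩ hu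
  have hextend : ∀ g : G, (∀ i : Fin d, ρ g (ρ (a ^ (i : ℕ)) v) ∈ S) → ∀ u ∈ S, ρ g u ∈ S := by
    intro g hg u hu
    refine Submodule.span_induction ?_ ?_ ?_ ?_ hu
    · rintro _ ⟨i, rfl⟩; exact hg i
    · simp
    · intro x y _ _ hx hy; rw [map_add]; exact add_mem hx hy
    · intro c x _ hx
      have : ρ g (c • x) = c • ρ g x := (ρ g).map_smul (c : K) x
      rw [this]; exact S.smul_mem _ hx
  have hSa : ∀ u ∈ S, ρ a u ∈ S := by
    refine hextend a fun i => ?_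
    rw [← Module.End.mul_apply, ← map_mul, ← pow_succ']
    rcases Nat.lt_or_ge ((i : ℕ) + 1) d with h | h
    · exact hSd _ h
    · have : (i : ℕ) + 1 = d := by omega
      rw [this, hPv]
      exact neg_mem (sum_mem fun i hi => hcE _ (prod_coeff_mem E x hx i) _
        (hSd i (Finset.mem_range.1 hi)))
  have hSak : ∀ k : ℕ, ∀ u ∈ S, ρ (a ^ k) u ∈ S := by
    intro k
    induction k with
    | zero => intro u hu; simpa using hu
    | succ k ih =>
      intro u hu; rw [pow_succ', map_mul, Module.End.mul_apply]; exact hSa _ (ih _ hu)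
  have hvS : v ∈ S := by simpa using hSd 0 hd
  have hSb : ∀ u ∈ S, ρ b u ∈ S := by
    refine hextend b fun i => ?_
    rw [← Module.End.mul_apply, ← map_mul, conj_pow_pow hba, map_mul, Module.End.mul_apply, hbv,
      map_smul]
    exact hcE _ hμE _ (hSak _ _ hvS)
  have hSbk : ∀ k : ℕ, ∀ u ∈ S, ρ (b ^ k) u ∈ S := by
    intro k
    induction k with
    | zero => intro u hu; simpa using hu
    | succ k ih =>
      intro u hu; rw [pow_succ', map_mul, Module.End.mul_apply]; exact hSb _ (ih _ hu)
  have hSg : ∀ g, ∀ u ∈ S, ρ g u ∈ S := by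
    intro g u hu
    obtain ⟨i, k, rfl⟩ := exists_eq_pow_mul_pow hba hgen g
    rw [map_mul, Module.End.mul_apply]
    exact hSak _ _ (hSbk _ _ hu)
  let T : Submodule K V := Submodule.span K (Set.range fun i : Fin d => ρ (a ^ (i : ℕ)) v)
  have hST : ∀ u ∈ S, u ∈ T := by
    intro u hu
    refine Submodule.span_induction ?_ ?_ ?_ ?_ hu
    · exact fun u hu => Submodule.subset_span hu
    · simp
    · intro x y _ _ hx hy; exact add_mem hx hy
    · intro c x _ hx; exact T.smul_mem (c : K) hx
  have hT : T = ⊤ := by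
    refine (hirr T ?_).resolve_left ?_
    · intro g u hu
      refine Submodule.span_induction ?_ ?_ ?_ ?_ hu
      · rintro _ ⟨i, rfl⟩; exact hST _ (hSg g _ (hSd i i.2))
      · simp
      · intro x y _ _ hx hy; rw [map_add]; exact add_mem hx hy
      · intro c x _ hx; rw [map_smul]; exact T.smul_mem _ hx
    · intro h
      have := hST v hvS
      rw [h] at this
      exact hv0 this
  let C : Module.Basis (Fin d) K V :=
    basisOfTopLeSpanOfCardEqFinrank (fun i : Fin d => ρ (a ^ (i : ℕ)) v) hT.ge (by simp [hfr])
  have hC : ∀ i : Fin d, C i = ρ (a ^ (i : ℕ)) v := fun i => by simp [C]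
  have hrepr : ∀ u ∈ S, ∀ i, C.repr u i ∈ E := by
    intro u hu i
    refine Submodule.span_induction ?_ ?_ ?_ ?_ hu
    · rintro _ ⟨k, rfl⟩
      simp only
      rw [← hC, Module.Basis.repr_self, Finsupp.single_apply]
      split_ifs
      exacts [one_mem E, zero_mem E]
    · simp [zero_mem]
    · intro x y _ _ hx hy; rw [map_add]; exact add_mem hx hy
    · intro c x _ hx
      have : C.repr (c • x) i = c * C.repr x i := by
        have : C.repr (c • x) = (c : K) • C.repr x := C.repr.map_smul (c : K) x
        rw [this]; rfl
      rw [this]; exact mul_mem c.2 hx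
  have hM : ∀ g i k, LinearMap.toMatrix C C (ρ g) i k ∈ E := by
    intro g i k
    rw [LinearMap.toMatrix_apply, hC]
    exact hrepr _ (hSg g _ (hSd k k.2)) i
  let Nm : G → Matrix (Fin d) (Fin d) E := fun g => Matrix.of fun i k => ⟨_, hM g i k⟩
  have hNm : ∀ g, (Nm g).map (algebraMap E K) = LinearMap.toMatrix C C (ρ g) := by
    intro g; ext i k; rfl
  have hinj : Function.Injective
      (fun A : Matrix (Fin d) (Fin d) E => A.map (algebraMap E K)) :=
    Matrix.map_injective (algebraMap E K).injective
  let Nh : G →* Matrix (Fin d) (Fin d) E :=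
    { toFun := Nm
      map_one' := by
        apply hinj
        simp only
        rw [hNm, map_one, LinearMap.toMatrix_one]
        simp
      map_mul' := by
        intro g h
        apply hinj
        simp only
        rw [hNm, map_mul, LinearMap.toMatrix_mul, Matrix.map_mul, hNm, hNm] }
  refine ⟨(Matrix.toLinAlgEquiv' : Matrix (Fin d) (Fin d) E ≃ₐ[E] _).toAlgHom.toMonoidHom.comp Nh,
    fun g => ?_⟩
  rw [LinearMap.trace_eq_matrix_trace K C, ← hNm]
  have : LinearMap.trace E _ (Matrix.toLin' (Nm g)) = (Nm g).trace := Matrix.trace_toLin'_eq _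
  change algebraMap E K (LinearMap.trace E _ (Matrix.toLin' (Nm g))) = _
  rw [this]
  simp [Matrix.trace]

/-- `ℚ_q` contains all `q - 1` roots of `X ^ (q - 1) - 1`, by Hensel's lemma at each nonzero residue
modulo `q`. -/
lemma rootsOfUnity_mem_padic {q : ℕ} [Fact q.Prime] {K : Type} [Field K] [Algebra ℚ_[q] K]
    {μ : K} (hμ : μ ^ (q - 1) = 1) : μ ∈ Set.range (algebraMap ℚ_[q] K) := by
  classical
  have hq : q.Prime := Fact.out
  have hq1 : 0 < q - 1 := by have := hq.two_le; omega
  have hroot : ∀ a : ℕ, ∃ z : ℤ_[q], a ∈ Finset.Icc 1 (q - 1) → z ^ (q - 1) = 1 ∧ ‖z - a‖ < 1 := by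
    intro a
    by_cases ha : a ∈ Finset.Icc 1 (q - 1)
    swap
    · exact ⟨0, fun h => absurd h ha⟩
    have haq : ¬ q ∣ a := by
      rw [Finset.mem_Icc] at ha
      intro h
      have := Nat.le_of_dvd (by omega) h
      omega
    let F : Polynomial ℤ_[q] := Polynomial.X ^ (q - 1) - 1
    have h1 : ‖F.aeval (a : ℤ_[q])‖ < 1 := by
      simp only [F, map_sub, map_pow, Polynomial.aeval_X, map_one]
      rw [← PadicInt.mem_nonunits, ← IsLocalRing.mem_maximalIdeal, ← PadicInt.ker_toZMod, RingHom.mem_ker]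
      rw [map_sub, map_pow, map_one, map_natCast, ZMod.pow_card_sub_one_eq_one, sub_self]
      rwa [Ne, ZMod.natCast_eq_zero_iff]
    have h2 : ‖F.derivative.aeval (a : ℤ_[q])‖ = 1 := by
      have : F.derivative.aeval (a : ℤ_[q]) = (((q - 1) * a ^ (q - 1 - 1) : ℕ) : ℤ_[q]) := by
        simp [F, Polynomial.derivative_X_pow]
      rw [this, PadicInt.norm_natCast_eq_one_iff]
      refine Nat.Coprime.mul_right ?_ (Nat.Coprime.pow_right _ ?_)
      · rw [hq.coprime_iff_not_dvd]
        intro h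
        have := Nat.le_of_dvd hq1 h
        omega
      · rwa [hq.coprime_iff_not_dvd]
    obtain ⟨z, hz, hza, -, -⟩ := hensels_lemma (F := F) (a := (a : ℤ_[q])) (by rw [h2]; simpa using h1)
    refine ⟨z, fun _ => ⟨?_, by rwa [h2] at hza⟩⟩
    have : z ^ (q - 1) - 1 = 0 := by simpa [F] using hz
    exact sub_eq_zero.1 this
  choose z hz using hroot
  let g : ℕ → K := fun a => algebraMap ℚ_[q] K (z a)
  have hinj : Set.InjOn g (Finset.Icc 1 (q - 1)) := by
    intro a ha a' ha' h
    have h2 : z a = z a' := Subtype.ext ((algebraMap ℚ_[q] K).injective h)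
    have h3 : ‖((a : ℤ_[q])) - a'‖ < 1 := by
      have e : (a : ℤ_[q]) - a' = (z a' - a') + (-(z a - a)) := by rw [h2]; ring
      rw [e]
      refine lt_of_le_of_lt (IsUltrametricDist.norm_add_le_max _ _) (max_lt (hz a' ha').2 (by rw [norm_neg]; exact (hz a ha).2))
    rw [← PadicInt.mem_nonunits, ← IsLocalRing.mem_maximalIdeal, ← PadicInt.ker_toZMod,
      RingHom.mem_ker, map_sub, map_natCast, map_natCast, sub_eq_zero,
      ZMod.natCast_eq_natCast_iff, Nat.ModEq] at h3
    simp only [Finset.coe_Icc, Set.mem_Icc] at ha ha'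
    rwa [Nat.mod_eq_of_lt (by omega), Nat.mod_eq_of_lt (by omega)] at h3
  have hsub : (Finset.Icc 1 (q - 1)).image g ⊆ Polynomial.nthRootsFinset (q - 1) (1 : K) := by
    intro y hy
    obtain ⟨a, ha, rfl⟩ := Finset.mem_image.1 hy
    rw [Polynomial.mem_nthRootsFinset hq1]
    have := (hz a ha).1
    simp only [g]
    rw [← map_pow]
    have h2 : ((z a : ℚ_[q])) ^ (q - 1) = 1 := by exact_mod_cast congrArg Subtype.val this
    rw [h2, map_one]
  have heq := Finset.eq_of_subset_of_card_le hsub (by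
    rw [Finset.card_image_of_injOn hinj]
    simp only [Nat.card_Icc, add_tsub_cancel_right]
    calc _ ≤ Multiset.card (Polynomial.nthRoots (q - 1) (1 : K)) := by
          rw [Polynomial.nthRootsFinset_def]; exact Multiset.toFinset_card_le _
      _ ≤ _ := Polynomial.card_nthRoots _ _)
  have hm : μ ∈ (Finset.Icc 1 (q - 1)).image g := by
    rw [heq, Polynomial.mem_nthRootsFinset hq1]; exact hμ
  obtain ⟨a, _, rfl⟩ := Finset.mem_image.1 hm
  exact ⟨_, rfl⟩

/-! ### The local field `ℚ_q(ω, ζ)`: unramified and totally ramified parts -/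

section Padic

variable {q : ℕ} [Fact q.Prime] {F L : Type} [Field F] [Algebra ℚ_[q] F]
  [NormedField L] [NormedAlgebra ℚ_[q] L] [IsUltrametricDist L] [FiniteDimensional ℚ_[q] L]
  [Algebra F L] [IsScalarTower ℚ_[q] F L]

lemma norm_algEquiv_apply (s : L ≃ₐ[ℚ_[q]] L) (x : L) : ‖s x‖ = ‖x‖ := by
  rw [NormedAlgebra.norm_eq_spectralNorm ℚ_[q], NormedAlgebra.norm_eq_spectralNorm ℚ_[q] x,
    ← spectralNorm_eq_of_equiv]

lemma norm_algebraMap_algEquiv (s : F ≃ₐ[ℚ_[q]] F) (x : F) :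
    ‖algebraMap F L (s x)‖ = ‖algebraMap F L x‖ := by
  rw [NormedAlgebra.norm_eq_spectralNorm ℚ_[q], NormedAlgebra.norm_eq_spectralNorm ℚ_[q] (algebraMap F L x),
    ← spectralNorm.eq_of_tower, ← spectralNorm.eq_of_tower, ← spectralNorm_eq_of_equiv]

lemma norm_eq_one_of_pow {N : ℕ} (hN : N ≠ 0) {x : L} (hx : x ^ N = 1) : ‖x‖ = 1 := by
  have := congrArg norm hx
  rw [norm_pow, norm_one] at this
  exact (pow_eq_one_iff_of_nonneg (norm_nonneg _) hN).1 this

lemma norm_natCast_of_not_dvd {N : ℕ} (hN : ¬ q ∣ N) : ‖(N : L)‖ = 1 := by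
  have h : ‖((N : ℚ_[q]))‖ = 1 := by
    rw [Padic.norm_natCast_eq_one_iff]
    exact ((Fact.out : q.Prime).coprime_iff_not_dvd).2 hN
  rw [← map_natCast (algebraMap ℚ_[q] L), norm_algebraMap', h]

/-- For `q ∤ N`, every `x ∈ F = ℚ_q(μ_N)` has coordinates in the powers of `ω` of absolute value at most
that of `x`, namely `c k = N⁻¹ * Tr (x * ω⁻ᵏ)`. The identity is Fourier inversion on `μ_N`: the sum
`∑ k, (s ω)⁻ᵏ * ωᵏ` vanishes for every automorphism `s ≠ 1`. The absolute value on `F` is that of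
an extension `L`. -/
lemma exists_unramified_expansion {N : ℕ} [NeZero N] (hN : ¬ q ∣ N) [IsCyclotomicExtension {N} ℚ_[q] F]
    {ω : F} (hω : IsPrimitiveRoot ω N) (x : F) :
    ∃ c : ℕ → ℚ_[q], (∀ k, ‖c k‖ ≤ ‖algebraMap F L x‖) ∧
      x = ∑ k ∈ range N, algebraMap ℚ_[q] F (c k) * ω ^ k := by
  classical
  have hN0 : N ≠ 0 := NeZero.ne N
  have : FiniteDimensional ℚ_[q] F := IsCyclotomicExtension.finiteDimensional {N} ℚ_[q] F
  have : IsGalois ℚ_[q] F := IsCyclotomicExtension.isGalois {N} ℚ_[q] F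
  have hω1 : ω ^ N = 1 := hω.pow_eq_one
  have hω0 : ω ≠ 0 := hω.ne_zero hN0
  have hωn : ‖algebraMap F L ω‖ = 1 := norm_eq_one_of_pow hN0 (by rw [← map_pow, hω1, map_one])
  have hNF : (N : F) ≠ 0 := by
    have : CharZero F := charZero_of_injective_algebraMap (algebraMap ℚ_[q] F).injective
    exact_mod_cast hN0
  refine ⟨fun k => (N : ℚ_[q])⁻¹ * Algebra.trace ℚ_[q] F (x * (ω⁻¹) ^ k), fun k => ?_, ?_⟩
  · have h1 : ‖((N : ℚ_[q]))‖ = 1 := by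
      rw [Padic.norm_natCast_eq_one_iff]
      exact ((Fact.out : q.Prime).coprime_iff_not_dvd).2 hN
    rw [norm_mul, norm_inv, h1, inv_one, one_mul, ← norm_algebraMap' L,
      IsScalarTower.algebraMap_apply ℚ_[q] F L, trace_eq_sum_automorphisms, map_sum]
    refine IsUltrametricDist.norm_sum_le_of_forall_le_of_nonneg (norm_nonneg _) fun s _ => ?_
    rw [norm_algebraMap_algEquiv, map_mul, map_pow, map_inv₀, norm_mul, norm_pow, norm_inv, hωn]
    simp
  · have key : ∀ s : F ≃ₐ[ℚ_[q]] F, ∑ k ∈ range N, s (x * (ω⁻¹) ^ k) * ω ^ k = if s = 1 then (N : F) * x else 0 := by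
      intro s
      have e : ∀ k, s (x * (ω⁻¹) ^ k) * ω ^ k = s x * ((s ω)⁻¹ * ω) ^ k := by
        intro k; rw [map_mul, map_pow, map_inv₀, mul_pow, mul_assoc]
      simp_rw [e, ← Finset.mul_sum]
      split_ifs with hs
      · subst hs
        simp [hω0, mul_comm]
      · have hne : (s ω)⁻¹ * ω ≠ 1 := by
          intro h
          apply hs
          have h2 : s ω = ω := by
            have : s ω ≠ 0 := by simpa using hω0
            field_simp at h; exact h.symm
          have h3 : (s : F →ₐ[ℚ_[q]] F) = AlgHom.id ℚ_[q] F :=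
            (hω.powerBasis ℚ_[q]).algHom_ext (by simpa using h2)
          ext y
          exact DFunLike.congr_fun h3 y
        have hz : ∑ k ∈ range N, ((s ω)⁻¹ * ω) ^ k = 0 := by
          have hg := mul_geom_sum ((s ω)⁻¹ * ω) N
          rw [mul_pow, inv_pow, ← map_pow, hω1, map_one, inv_one, one_mul, sub_self] at hg
          exact (mul_eq_zero.1 hg).resolve_left (sub_ne_zero.2 hne)
        rw [hz, mul_zero]
    simp_rw [map_mul, map_inv₀, map_natCast, trace_eq_sum_automorphisms, mul_assoc, ← Finset.mul_sum,
      Finset.sum_mul]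
    rw [Finset.sum_comm]
    simp_rw [key]
    simp
    rw [inv_mul_cancel_left₀ hNF]

/-- `ℚ_q(μ_N)` is unramified over `ℚ_q` for `q ∤ N`: its value group is generated by `q`. -/
lemma exists_norm_eq_zpow {N : ℕ} [NeZero N] (hN : ¬ q ∣ N) [IsCyclotomicExtension {N} ℚ_[q] F]
    {x : F} (hx : x ≠ 0) : ∃ m : ℤ, ‖algebraMap F L x‖ = (q : ℝ) ^ m := by
  have hω := IsCyclotomicExtension.zeta_spec N ℚ_[q] F
  obtain ⟨c, hc, hxc⟩ := exists_unramified_expansion (L := L) hN hω x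
  have hωn : ‖algebraMap F L (IsCyclotomicExtension.zeta N ℚ_[q] F)‖ = 1 :=
    norm_eq_one_of_pow (NeZero.ne N) (by rw [← map_pow, hω.pow_eq_one, map_one])
  obtain ⟨k, hk, hle⟩ := IsUltrametricDist.exists_norm_finsetSum_le_of_nonempty
    (t := range N) (nonempty_range_iff.2 (NeZero.ne N))
    (fun k => algebraMap F L (algebraMap ℚ_[q] F (c k) * (IsCyclotomicExtension.zeta N ℚ_[q] F) ^ k))
  rw [← map_sum, ← hxc, map_mul, map_pow, norm_mul, norm_pow, hωn, one_pow, mul_one,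
    ← IsScalarTower.algebraMap_apply, norm_algebraMap'] at hle
  have heq := le_antisymm hle (hc k)
  have hc0 : c k ≠ 0 := by
    intro h
    rw [h, norm_zero, norm_eq_zero] at heq
    exact hx ((algebraMap F L).injective (by rw [heq, map_zero]))
  exact ⟨_, heq.trans (Padic.norm_eq_zpow_neg_valuation hc0)⟩

/-- `ζ - 1` has valuation `1 / (q - 1)`: the product of the `1 - ζ ^ k` over `0 < k < q` is `q`, and these
factors all divide one another. -/
lemma norm_one_sub_zeta_pow {ζ : L} (hζ : IsPrimitiveRoot ζ q) : ‖ζ - 1‖ ^ (q - 1) = (q : ℝ)⁻¹ := by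
  have hq : q.Prime := Fact.out
  have hle : ∀ (x : L), ‖x‖ = 1 → ∀ m : ℕ, ‖1 - x ^ m‖ ≤ ‖1 - x‖ := by
    intro x hx m
    rw [← mul_neg_geom_sum, norm_mul]
    refine mul_le_of_le_one_right (norm_nonneg _) ?_
    refine IsUltrametricDist.norm_sum_le_of_forall_le_of_nonneg zero_le_one fun i _ => ?_
    rw [norm_pow, hx, one_pow]
  have hn : ∀ m : ℕ, ‖ζ ^ m‖ = 1 := fun m =>
    norm_eq_one_of_pow hq.ne_zero (by rw [← pow_mul, mul_comm, pow_mul, hζ.pow_eq_one, one_pow])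
  have h1 : ∀ k ∈ range (q - 1), ‖1 - ζ ^ (k + 1)‖ = ‖ζ - 1‖ := by
    intro k hk
    rw [mem_range] at hk
    rw [norm_sub_rev ζ 1]
    refine le_antisymm (hle ζ (by simpa using hn 1) _) ?_
    have hc : Nat.Coprime (k + 1) q := by
      rw [Nat.coprime_comm, hq.coprime_iff_not_dvd]
      intro h
      have := Nat.le_of_dvd (by omega) h
      omega
    obtain ⟨m, -, hm⟩ := Nat.exists_mul_mod_eq_one_of_coprime hc hq.one_lt
    have h2 : (ζ ^ (k + 1)) ^ m = ζ := by
      rw [← pow_mul, ← Nat.div_add_mod ((k + 1) * m) q, hm, pow_add, pow_mul, hζ.pow_eq_one]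
      simp
    have := hle (ζ ^ (k + 1)) (hn _) m
    rwa [h2] at this
  have h2 : ∏ k ∈ range (q - 1), (1 - ζ ^ (k + 1)) = (q : L) := by
    have h := IsPrimitiveRoot.prod_one_sub_pow_eq_order (R := L) (μ := ζ) (n := q - 1)
      (by rwa [Nat.sub_add_cancel hq.one_le])
    rw [h]
    have : ((q - 1 + 1 : ℕ) : L) = (q : L) := by rw [Nat.sub_add_cancel hq.one_le]
    exact_mod_cast this
  have h3 := congrArg norm h2
  rw [norm_prod, Finset.prod_congr rfl h1, Finset.prod_const, Finset.card_range,
    ← map_natCast (algebraMap ℚ_[q] L), norm_algebraMap', Padic.norm_p] at h3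
  exact h3

/-- With coefficients in the unramified field `F`, the terms `x * (ζ - 1) ^ i` with `i < q - 1` have
valuations in distinct classes modulo `ℤ`. -/
lemma norm_term_ne {N : ℕ} [NeZero N] (hN : ¬ q ∣ N) [IsCyclotomicExtension {N} ℚ_[q] F]
    {ζ : L} (hζ : IsPrimitiveRoot ζ q) {x y : F} (hx : x ≠ 0) (hy : y ≠ 0) {i i' : ℕ}
    (hi : i < q - 1) (hi' : i' < q - 1)
    (h : ‖algebraMap F L x * (ζ - 1) ^ i‖ = ‖algebraMap F L y * (ζ - 1) ^ i'‖) : i = i' := by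
  have hq : q.Prime := Fact.out
  obtain ⟨m, hm⟩ := exists_norm_eq_zpow (L := L) hN hx
  obtain ⟨m', hm'⟩ := exists_norm_eq_zpow (L := L) hN hy
  have hz := norm_one_sub_zeta_pow hζ
  have h2 := congrArg (· ^ (q - 1)) h
  have e : ∀ (m : ℤ) (i : ℕ), ((q : ℝ) ^ m * ‖ζ - 1‖ ^ i) ^ (q - 1) = (q : ℝ) ^ (m * (q - 1 : ℕ) - i) := by
    intro m i
    have hq0 : (q : ℝ) ≠ 0 := by exact_mod_cast hq.ne_zero
    rw [mul_pow, ← pow_mul, mul_comm i, pow_mul, hz, inv_pow, zpow_sub₀ hq0, zpow_mul, zpow_natCast,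
      zpow_natCast]
    rfl
  simp only [norm_mul, norm_pow, hm, hm', e] at h2
  have h3 := zpow_right_injective₀ (a := (q : ℝ)) (by exact_mod_cast hq.pos)
    (by exact_mod_cast hq.one_lt.ne') h2
  have h4 : (m - m') * (q - 1 : ℕ) = (i : ℤ) - i' := by linarith
  have h5 : |(i : ℤ) - i'| < ((q - 1 : ℕ) : ℤ) := by
    rw [abs_lt]; constructor <;> omega
  have h6 := Int.eq_zero_of_abs_lt_dvd (Dvd.intro_left _ h4) h5
  omega

/-- Since the nonzero terms have distinct absolute values, none exceeds their sum. -/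
lemma norm_term_le {N : ℕ} [NeZero N] (hN : ¬ q ∣ N) [IsCyclotomicExtension {N} ℚ_[q] F]
    {ζ : L} (hζ : IsPrimitiveRoot ζ q) (c : ℕ → F) {i : ℕ} (hi : i < q - 1) :
    ‖algebraMap F L (c i) * (ζ - 1) ^ i‖ ≤ ‖∑ i ∈ range (q - 1), algebraMap F L (c i) * (ζ - 1) ^ i‖ := by
  classical
  by_cases h0 : c i = 0
  · simp [h0]
  have e : ∑ i ∈ range (q - 1), algebraMap F L (c i) * (ζ - 1) ^ i =
      ∑ i ∈ (range (q - 1)).filter (fun i => c i ≠ 0), algebraMap F L (c i) * (ζ - 1) ^ i := by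
    rw [Finset.sum_filter_of_ne]
    intro k _ hk hc
    apply hk; simp [hc]
  have h := IsUltrametricDist.nnnorm_sum_eq_sup_of_pairwise_ne
    (s := (range (q - 1)).filter (fun i => c i ≠ 0)) (f := fun i => algebraMap F L (c i) * (ζ - 1) ^ i) (by
      intro k hk k' hk' hne heq
      simp only [coe_filter, mem_range, Set.mem_ofPred_eq] at hk hk'
      exact hne (norm_term_ne hN hζ hk.2 hk'.2 hk.1 hk'.1 (congrArg NNReal.toReal heq)))
  rw [e, ← coe_nnnorm, ← coe_nnnorm, NNReal.coe_le_coe, h]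
  exact Finset.le_sup (f := fun i => ‖algebraMap F L (c i) * (ζ - 1) ^ i‖₊) (by simp [hi, h0])

/-- `ℚ_q(μ_N, ζ)` has degree `q - 1` over `ℚ_q(μ_N)`: by `norm_term_le` the powers `(ζ - 1) ^ i` with
`i < q - 1` are linearly independent over `F`. -/
lemma irreducible_cyclotomic_unramified {N : ℕ} [NeZero N] (hN : ¬ q ∣ N) [IsCyclotomicExtension {N} ℚ_[q] F]
    {ζ : L} (hζ : IsPrimitiveRoot ζ q) : Irreducible (Polynomial.cyclotomic q F) := by
  have hq : q.Prime := Fact.out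
  have : FiniteDimensional F L := Module.Finite.of_restrictScalars_finite ℚ_[q] F L
  have hζint : IsIntegral F ζ := IsIntegral.of_finite F ζ
  have hdvd : minpoly F ζ ∣ Polynomial.cyclotomic q F := by
    apply minpoly.dvd
    have : NeZero ((q : ℕ) : L) := by
      have : CharZero L := charZero_of_injective_algebraMap (algebraMap ℚ_[q] L).injective
      exact ⟨by exact_mod_cast hq.ne_zero⟩
    rw [Polynomial.aeval_def, Polynomial.eval₂_eq_eval_map, Polynomial.map_cyclotomic]
    exact hζ.isRoot_cyclotomic hq.pos
  have hdeg : q - 1 ≤ (minpoly F ζ).natDegree := by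
    by_contra! hlt
    let P := (minpoly F ζ).comp (Polynomial.X + 1)
    have hP0 : P ≠ 0 := by
      have hm : P.Monic := (minpoly.monic hζint).comp_X_add_C 1
      exact hm.ne_zero
    have hPd : P.natDegree < q - 1 := by
      have : P.natDegree = (minpoly F ζ).natDegree := by
        have := Polynomial.natDegree_comp (p := minpoly F ζ) (q := Polynomial.X + Polynomial.C 1)
        rwa [Polynomial.natDegree_X_add_C, mul_one, map_one] at this
      omega
    have hroot : P.aeval (ζ - 1) = 0 := by
      simp [P, Polynomial.aeval_comp]
    rw [Polynomial.aeval_eq_sum_range' hPd] at hroot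
    simp_rw [Algebra.smul_def] at hroot
    apply hP0
    ext i
    rw [Polynomial.coeff_zero]
    by_cases hi : i < q - 1
    · have h := norm_term_le hN hζ P.coeff hi
      rw [hroot, norm_zero] at h
      have h2 := norm_le_zero_iff.1 h
      have hz : (ζ - 1) ^ i ≠ 0 := pow_ne_zero _ (sub_ne_zero.2 (hζ.ne_one hq.one_lt))
      have h3 := (mul_eq_zero.1 h2).resolve_right hz
      exact (algebraMap F L).injective (by rw [h3, map_zero])
    · exact Polynomial.coeff_eq_zero_of_natDegree_lt (by omega)
  have heq : minpoly F ζ = Polynomial.cyclotomic q F := by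
    symm
    apply Polynomial.eq_of_monic_of_dvd_of_natDegree_le (minpoly.monic hζint)
      (Polynomial.cyclotomic.monic q F) hdvd
    rw [Polynomial.natDegree_cyclotomic, Nat.totient_prime hq]
    exact hdeg
  rw [← heq]
  exact minpoly.irreducible hζint

lemma exists_aut {N : ℕ} [NeZero N] (hN : ¬ q ∣ N) [IsCyclotomicExtension {N} ℚ_[q] F]
    [IsCyclotomicExtension {q} F L] {ζ : L} (hζ : IsPrimitiveRoot ζ q) {k : ℕ} (hk : k.Coprime q) :
    ∃ s : L ≃ₐ[F] L, s ζ = ζ ^ k := by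
  have hq : q.Prime := Fact.out
  have : NeZero q := ⟨hq.ne_zero⟩
  have hirr := irreducible_cyclotomic_unramified (F := F) hN hζ
  have hμ := hζ.pow_of_coprime k hk
  have : CharZero F := charZero_of_injective_algebraMap (algebraMap ℚ_[q] F).injective
  have : NeZero (q : F) := ⟨by exact_mod_cast hq.ne_zero⟩
  have hmin : minpoly F (hζ.powerBasis F).gen = minpoly F (hμ.powerBasis F).gen := by
    rw [IsPrimitiveRoot.powerBasis_gen, IsPrimitiveRoot.powerBasis_gen,
      ← hζ.minpoly_eq_cyclotomic_of_irreducible hirr, ← hμ.minpoly_eq_cyclotomic_of_irreducible hirr]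
  exact ⟨(hζ.powerBasis F).equivOfMinpoly (hμ.powerBasis F) hmin,
    (congrArg _ (hζ.powerBasis_gen F).symm).trans
      (((hζ.powerBasis F).equivOfMinpoly_gen (hμ.powerBasis F) hmin).trans (hμ.powerBasis_gen F))⟩

lemma exists_ramified_expansion {N : ℕ} [NeZero N] (hN : ¬ q ∣ N) [IsCyclotomicExtension {N} ℚ_[q] F]
    [IsCyclotomicExtension {q} F L] {ζ : L} (hζ : IsPrimitiveRoot ζ q) (x : L) :
    ∃ c : ℕ → F, x = ∑ i ∈ range (q - 1), algebraMap F L (c i) * (ζ - 1) ^ i := by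
  have hq : q.Prime := Fact.out
  have : NeZero q := ⟨hq.ne_zero⟩
  have hirr := irreducible_cyclotomic_unramified (F := F) hN hζ
  obtain ⟨P, hP, hx⟩ := (hζ.subOnePowerBasis F).exists_eq_aeval x
  have hd : (hζ.subOnePowerBasis F).dim = q - 1 := by
    rw [← PowerBasis.finrank, IsCyclotomicExtension.finrank L hirr, Nat.totient_prime hq]
  rw [hd] at hP
  rw [IsPrimitiveRoot.subOnePowerBasis_gen, Polynomial.aeval_eq_sum_range' hP] at hx
  refine ⟨P.coeff, ?_⟩
  rw [hx]
  simp_rw [Algebra.smul_def]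

/-! ### Residue field and the norm obstruction -/

/-- The closed unit ball of an ultrametric normed field, as a subring. -/
def unitBallSubring (L : Type) [NormedField L] [IsUltrametricDist L] : Subring L where
  carrier := {x | ‖x‖ ≤ 1}
  mul_mem' {x y} hx hy := by
    change ‖x * y‖ ≤ 1
    rw [norm_mul]; exact mul_le_one₀ hx (norm_nonneg _) hy
  one_mem' := by change ‖(1 : L)‖ ≤ 1; rw [norm_one]
  add_mem' {x y} hx hy := by
    change ‖x + y‖ ≤ 1
    exact (IsUltrametricDist.norm_add_le_max x y).trans (max_le hx hy)
  zero_mem' := by change ‖(0 : L)‖ ≤ 1; rw [norm_zero]; exact zero_le_one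
  neg_mem' {x} hx := by change ‖-x‖ ≤ 1; rw [norm_neg]; exact hx

/-- The open unit ball, as an ideal of the closed unit ball. -/
def unitBallIdeal (L : Type) [NormedField L] [IsUltrametricDist L] : Ideal (unitBallSubring L) where
  carrier := {x | ‖(x : L)‖ < 1}
  add_mem' {x y} hx hy := by
    change ‖(x : L) + y‖ < 1
    exact (IsUltrametricDist.norm_add_le_max (x : L) y).trans_lt (max_lt hx hy)
  zero_mem' := by change ‖(0 : L)‖ < 1; rw [norm_zero]; exact zero_lt_one
  smul_mem' x y hy := by
    change ‖(x : L) * y‖ < 1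
    rw [norm_mul]
    exact mul_lt_one_of_nonneg_of_lt_one_right x.2 (norm_nonneg _) hy

lemma mk_eq_mk_iff_norm {x y : unitBallSubring L} :
    Ideal.Quotient.mk (unitBallIdeal L) x = Ideal.Quotient.mk (unitBallIdeal L) y ↔ ‖(x : L) - y‖ < 1 := by
  rw [Ideal.Quotient.eq]; rfl

/-- The residue ring of `L` has characteristic `q`. -/
lemma charP_residue : CharP (unitBallSubring L ⧸ unitBallIdeal L) q := by
  have hq : q.Prime := Fact.out
  have hnt : Nontrivial (unitBallSubring L ⧸ unitBallIdeal L) := by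
    apply Ideal.Quotient.nontrivial_iff.2
    rw [Ideal.ne_top_iff_one]
    intro h
    have : ‖(1 : L)‖ < 1 := h
    simp at this
  have h0 : ((q : ℕ) : unitBallSubring L ⧸ unitBallIdeal L) = 0 := by
    rw [← map_natCast (Ideal.Quotient.mk (unitBallIdeal L)), ← map_zero (Ideal.Quotient.mk (unitBallIdeal L)),
      mk_eq_mk_iff_norm]
    have : ‖((q : ℕ) : L)‖ < 1 := by
      rw [← map_natCast (algebraMap ℚ_[q] L), norm_algebraMap', Padic.norm_p]
      exact inv_lt_one_of_one_lt₀ (by exact_mod_cast hq.one_lt)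
    simpa using this
  exact (CharP.charP_iff_prime_eq_zero hq).2 h0

/-- `L / F` is totally ramified: every integral element of `L` is congruent to an integral element of `F`. -/
lemma exists_base_residue {N : ℕ} [NeZero N] (hN : ¬ q ∣ N) [IsCyclotomicExtension {N} ℚ_[q] F]
    [IsCyclotomicExtension {q} F L] {ζ : L} (hζ : IsPrimitiveRoot ζ q) {x : L} (hx : ‖x‖ ≤ 1) :
    ∃ c : F, ‖algebraMap F L c‖ ≤ 1 ∧ ‖x - algebraMap F L c‖ < 1 := by
  have hq : q.Prime := Fact.out
  have hq1 : 0 < q - 1 := by have := hq.two_le; omega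
  obtain ⟨c, hc⟩ := exists_ramified_expansion (F := F) hN hζ x
  have hle : ∀ i < q - 1, ‖algebraMap F L (c i) * (ζ - 1) ^ i‖ ≤ 1 := by
    intro i hi
    refine (norm_term_le hN hζ c hi).trans ?_
    rwa [← hc]
  refine ⟨c 0, by simpa using hle 0 hq1, ?_⟩
  have e : x - algebraMap F L (c 0) = ∑ i ∈ (range (q - 1)).erase 0, algebraMap F L (c i) * (ζ - 1) ^ i := by
    rw [← Finset.sum_erase_add _ _ (mem_range.2 hq1)] at hc
    rw [hc]; simp
  rw [e]
  rcases ((range (q - 1)).erase 0).eq_empty_or_nonempty with h | h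
  · rw [h]; simp
  obtain ⟨i, hi, hle'⟩ := IsUltrametricDist.exists_norm_finsetSum_le_of_nonempty h
    (fun i => algebraMap F L (c i) * (ζ - 1) ^ i)
  refine hle'.trans_lt ?_
  rw [mem_erase, mem_range] at hi
  refine lt_of_le_of_ne (hle i hi.2) fun h1 => hi.1 ?_
  have hci : c i ≠ 0 := by
    intro h0
    rw [h0, map_zero, zero_mul, norm_zero] at h1
    exact zero_ne_one h1
  exact norm_term_ne (y := (1 : F)) hN hζ hci one_ne_zero hi.2 hq1 (by simpa using h1)

lemma exists_nat_residue (z : ℚ_[q]) (hz : ‖z‖ ≤ 1) : ∃ n : ℕ, ‖z - n‖ < 1 := by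
  refine ⟨PadicInt.zmodRepr ⟨z, hz⟩, ?_⟩
  have := PadicInt.sub_zmodRepr_mem (⟨z, hz⟩ : ℤ_[q])
  rw [PadicInt.maximalIdeal_eq_span_p, ← PadicInt.maximalIdeal_eq_span_p, IsLocalRing.mem_maximalIdeal,
    PadicInt.mem_nonunits] at this
  exact this

/-- The residue field of `L` lies in `𝔽_{q^f}` as soon as `N ∣ q ^ f - 1`, as it is generated by the
image of `μ_N`. -/
lemma frobenius_residue {N f : ℕ} [NeZero N] (hN : ¬ q ∣ N) [IsCyclotomicExtension {N} ℚ_[q] F]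
    [IsCyclotomicExtension {q} F L] {ζ : L} (hζ : IsPrimitiveRoot ζ q)
    (hf : N ∣ q ^ f - 1) (x : unitBallSubring L) :
    Ideal.Quotient.mk (unitBallIdeal L) (x ^ q ^ f) = Ideal.Quotient.mk (unitBallIdeal L) x := by
  have hq : q.Prime := Fact.out
  have := charP_residue (q := q) (L := L)
  have : ExpChar (unitBallSubring L ⧸ unitBallIdeal L) q := ExpChar.prime hq
  rw [map_pow, ← iterateFrobenius_def]
  set φ := iterateFrobenius (unitBallSubring L ⧸ unitBallIdeal L) q f
  set π := Ideal.Quotient.mk (unitBallIdeal L)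
  have hω := IsCyclotomicExtension.zeta_spec N ℚ_[q] F
  set ω := IsCyclotomicExtension.zeta N ℚ_[q] F
  obtain ⟨y, hy, hxy⟩ := exists_base_residue (F := F) hN hζ x.2
  obtain ⟨c, hc, hyc⟩ := exists_unramified_expansion (L := L) hN hω y
  have hcn : ∀ k, ‖c k‖ ≤ 1 := fun k => (hc k).trans hy
  choose m hm using fun k => exists_nat_residue (c k) (hcn k)
  have hω1 : (algebraMap F L ω) ^ N = 1 := by rw [← map_pow, hω.pow_eq_one, map_one]
  let w : unitBallSubring L := ⟨algebraMap F L ω, (norm_eq_one_of_pow (NeZero.ne N) hω1).le⟩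
  have hx : π x = π (∑ k ∈ range N, (m k : unitBallSubring L) * w ^ k) := by
    rw [mk_eq_mk_iff_norm]
    have e : (x : L) - (∑ k ∈ range N, (m k : unitBallSubring L) * w ^ k : unitBallSubring L) =
        (x - algebraMap F L y) + ∑ k ∈ range N, algebraMap ℚ_[q] L (c k - m k) * (algebraMap F L ω) ^ k := by
      have e1 : ((∑ k ∈ range N, (m k : unitBallSubring L) * w ^ k : unitBallSubring L) : L) =
          ∑ k ∈ range N, (m k : L) * (algebraMap F L ω) ^ k := by
        push_cast; rfl
      have e2 : algebraMap F L y = ∑ k ∈ range N, algebraMap ℚ_[q] L (c k) * (algebraMap F L ω) ^ k := by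
        conv_lhs => rw [hyc]
        simp only [map_sum, map_mul, map_pow, ← IsScalarTower.algebraMap_apply]
      simp only [map_sub, sub_mul, Finset.sum_sub_distrib, map_natCast]
      rw [e1, e2]
      ring
    rw [e]
    refine (IsUltrametricDist.norm_add_le_max _ _).trans_lt (max_lt hxy ?_)
    obtain ⟨k, hk, hle'⟩ := IsUltrametricDist.exists_norm_finsetSum_le_of_nonempty
      (nonempty_range_iff.2 (NeZero.ne N))
      (fun k => algebraMap ℚ_[q] L (c k - m k) * (algebraMap F L ω) ^ k)
    refine hle'.trans_lt ?_
    rw [norm_mul, norm_pow, norm_algebraMap', norm_eq_one_of_pow (NeZero.ne N) hω1, one_pow, mul_one]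
    exact hm k
  have hφw : φ (π w) = π w := by
    have hw : w ^ q ^ f = w := by
      have h1 : w ^ N = 1 := Subtype.ext hω1
      obtain ⟨t, ht⟩ := hf
      have : q ^ f = N * t + 1 := by
        have := Nat.one_le_pow f q hq.pos
        omega
      rw [this, pow_succ, pow_mul, h1, one_pow, one_mul]
    change (π w) ^ q ^ f = π w
    rw [← map_pow, hw]
  rw [hx]
  simp only [map_sum, map_mul, map_pow, map_natCast, hφw]

/-- Since `L / F` is totally ramified, automorphisms of `L / F` act trivially on residues. -/
lemma aut_residue {N : ℕ} [NeZero N] (hN : ¬ q ∣ N) [IsCyclotomicExtension {N} ℚ_[q] F]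
    [IsCyclotomicExtension {q} F L] {ζ : L} (hζ : IsPrimitiveRoot ζ q)
    (s : L ≃ₐ[F] L) {x : L} (hx : ‖x‖ ≤ 1) : ‖s x - x‖ < 1 := by
  obtain ⟨y, hy, hxy⟩ := exists_base_residue (F := F) hN hζ hx
  have e : s x - x = s (x - algebraMap F L y) + (-(x - algebraMap F L y)) := by
    rw [map_sub, AlgEquiv.commutes]; ring
  rw [e]
  refine (IsUltrametricDist.norm_add_le_max _ _).trans_lt (max_lt ?_ (by rwa [norm_neg]))
  rwa [show s (x - algebraMap F L y) = (s.restrictScalars ℚ_[q]) (x - algebraMap F L y) from rfl,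
    norm_algEquiv_apply]

/-- Norm obstruction. An `x` whose norm along `s` is `ω` is a unit, and all `s ^ i x` have the same
residue, so `ω` is a `d`-th power in the residue field. As `ω` keeps its order `N` there, and units
of the residue field have exponent `q ^ f - 1`, this forces `d * N ∣ q ^ f - 1`. -/
lemma dvd_of_norm_eq {N f d : ℕ} [NeZero N] (hN : ¬ q ∣ N) [IsCyclotomicExtension {N} ℚ_[q] F]
    [IsCyclotomicExtension {q} F L] {ζ : L} (hζ : IsPrimitiveRoot ζ q) {ω : F} (hω : IsPrimitiveRoot ω N)
    (hf : N ∣ q ^ f - 1) (hd : 0 < d) (hdq : d ∣ q ^ f - 1) (s : L ≃ₐ[F] L) (x : L)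
    (hx : ∏ i ∈ range d, (s ^ i) x = algebraMap F L ω) : d * N ∣ q ^ f - 1 := by
  have hq : q.Prime := Fact.out
  have hω1 : (algebraMap F L ω) ^ N = 1 := by rw [← map_pow, hω.pow_eq_one, map_one]
  have hωn := norm_eq_one_of_pow (NeZero.ne N) hω1
  have hsn : ∀ i : ℕ, ‖(s ^ i) x‖ = ‖x‖ := fun i =>
    norm_algEquiv_apply (q := q) ((s ^ i).restrictScalars ℚ_[q]) x
  have hxn : ‖x‖ = 1 := by
    have h := congrArg norm hx
    rw [norm_prod, Finset.prod_congr rfl (fun i _ => hsn i), Finset.prod_const, card_range, hωn] at h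
    exact (pow_eq_one_iff_of_nonneg (norm_nonneg _) hd.ne').1 h
  set π := Ideal.Quotient.mk (unitBallIdeal L)
  let X : unitBallSubring L := ⟨x, hxn.le⟩
  let W : unitBallSubring L := ⟨algebraMap F L ω, hωn.le⟩
  have h1 : π X ^ d = π W := by
    have e : W = ∏ i ∈ range d, (⟨(s ^ i) x, (hsn i).trans_le hxn.le⟩ : unitBallSubring L) := by
      apply Subtype.ext
      refine hx.symm.trans (Eq.symm ?_)
      refine (map_prod (unitBallSubring L).subtype
        (fun i => (⟨(s ^ i) x, (hsn i).trans_le hxn.le⟩ : unitBallSubring L)) (range d)).trans ?_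
      rfl
    rw [e, map_prod]
    rw [← card_range d, ← Finset.prod_const, card_range]
    refine Finset.prod_congr rfl fun i _ => ?_
    rw [eq_comm, mk_eq_mk_iff_norm]
    exact aut_residue hN hζ (s ^ i) hxn.le
  have hfr : π X ^ (q ^ f) = π X := by rw [← map_pow]; exact frobenius_residue (F := F) hN hζ hf X
  have hXu : π X ^ (q ^ f - 1) = 1 := by
    let Y : unitBallSubring L := ⟨x⁻¹, by change ‖x⁻¹‖ ≤ 1; rw [norm_inv, hxn, inv_one]⟩
    have hXY : π X * π Y = 1 := by
      rw [← map_mul, ← map_one π]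
      congr 1
      apply Subtype.ext
      exact mul_inv_cancel₀ (by rw [← norm_ne_zero_iff, hxn]; exact one_ne_zero)
    have h2 : π X ^ (q ^ f - 1) * π X = π X := by
      rw [← pow_succ, Nat.sub_add_cancel (Nat.one_le_pow f q hq.pos), hfr]
    calc π X ^ (q ^ f - 1) = π X ^ (q ^ f - 1) * π X * π Y := by rw [mul_assoc, hXY, mul_one]
      _ = 1 := by rw [h2, hXY]
  obtain ⟨u, hu⟩ := hdq
  have hWu : π W ^ u = 1 := by rw [← h1, ← pow_mul, ← hu, hXu]
  have hNu : N ∣ u := by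
    rw [← hω.pow_eq_one_iff_dvd]
    by_contra hne
    have hg := mul_geom_sum (ω ^ u) N
    rw [← pow_mul, mul_comm u N, pow_mul, hω.pow_eq_one, one_pow, sub_self] at hg
    have hs := (mul_eq_zero.1 hg).resolve_left (sub_ne_zero.2 hne)
    have hs2 : ∑ i ∈ range N, (W ^ u) ^ i = 0 := by
      apply Subtype.ext
      have := congrArg (algebraMap F L) hs
      simpa [W] using this
    have hs3 := congrArg π hs2
    simp only [map_sum, map_pow, hWu, one_pow, sum_const, card_range, map_zero, nsmul_eq_mul, mul_one] at hs3
    rw [← map_natCast π, ← map_zero π, mk_eq_mk_iff_norm] at hs3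
    have := norm_natCast_of_not_dvd (L := L) hN
    simp [this] at hs3
  rw [hu]
  exact Nat.mul_dvd_mul_left d hNu

end Padic

lemma isCyclotomicExtension_adjoin_simple {F K : Type} [Field F] [Field K] [Algebra F K] {n : ℕ} (hn : 0 < n)
    {ζ : K} (hζ : IsPrimitiveRoot ζ n) :
    IsCyclotomicExtension {n} F (IntermediateField.adjoin F {ζ}) := by
  have : NeZero n := ⟨hn.ne'⟩
  change IsCyclotomicExtension {n} F (IntermediateField.adjoin F {ζ}).toSubalgebra
  rw [IntermediateField.adjoin_simple_toSubalgebra_of_isAlgebraic (hζ.isIntegral hn).tower_top.isAlgebraic]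
  exact hζ.adjoin_isCyclotomicExtension F

/-- The field `L = ℚ_q(ω, ζ)` inside `K`, with the automorphism `s : ζ ↦ ζ ^ l` over `ℚ_q(ω)`, and the
norm obstruction for `ω`. Membership and fixedness are stated for elements of `K`. -/
theorem exists_local_field {q : ℕ} [Fact q.Prime] {K : Type} [Field K] [Algebra ℚ_[q] K] {N l d f : ℕ}
    (hN0 : 0 < N) (hN : ¬ q ∣ N) {ω ζ : K} (hω : IsPrimitiveRoot ω N) (hζ : IsPrimitiveRoot ζ q)
    (hd : 0 < d) (hl : l ^ d ≡ 1 [MOD q]) (hf : N ∣ q ^ f - 1) (hdq : d ∣ q ^ f - 1) :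
    ∃ (L : Subfield K) (s : L ≃+* L),
      (∀ c, ∃ h : algebraMap ℚ_[q] K c ∈ L, s ⟨_, h⟩ = ⟨_, h⟩) ∧
      (∃ h : ω ∈ L, s ⟨ω, h⟩ = ⟨ω, h⟩) ∧ (∃ h : ζ ∈ L, s ⟨ζ, h⟩ = ⟨ζ, h⟩ ^ l) ∧
      s ^ d = 1 ∧ ∀ x, ((∏ i ∈ range d, (s ^ i) x : L) : K) = ω → d * N ∣ q ^ f - 1 := by
  have hq : q.Prime := Fact.out
  have : NeZero N := ⟨hN0.ne'⟩
  have : NeZero q := ⟨hq.ne_zero⟩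
  let F := IntermediateField.adjoin ℚ_[q] {ω}
  let L := IntermediateField.adjoin F {ζ}
  have hF : IsCyclotomicExtension {N} ℚ_[q] F := isCyclotomicExtension_adjoin_simple hN0 hω
  have hL : IsCyclotomicExtension {q} F L := isCyclotomicExtension_adjoin_simple hq.pos hζ
  have : FiniteDimensional ℚ_[q] F := IsCyclotomicExtension.finiteDimensional {N} ℚ_[q] F
  have : FiniteDimensional F L := IsCyclotomicExtension.finiteDimensional {q} F L
  have : FiniteDimensional ℚ_[q] L := FiniteDimensional.trans ℚ_[q] F L
  let : NormedField L := spectralNorm.normedField ℚ_[q] L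
  let : NormedAlgebra ℚ_[q] L := spectralNorm.normedAlgebra ℚ_[q] L
  have : IsUltrametricDist L := IsUltrametricDist.isUltrametricDist_of_isNonarchimedean_norm
    isNonarchimedean_spectralNorm
  let ω' : F := ⟨ω, IntermediateField.mem_adjoin_simple_self _ ω⟩
  let ζ' : L := ⟨ζ, IntermediateField.mem_adjoin_simple_self _ ζ⟩
  have hω' : IsPrimitiveRoot ω' N := by
    rw [← IsPrimitiveRoot.coe_submonoidClass_iff]; exact hω
  have hζ' : IsPrimitiveRoot ζ' q := by
    rw [← IsPrimitiveRoot.coe_submonoidClass_iff]; exact hζ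
  have hlq : l.Coprime q := by
    rw [Nat.coprime_comm, hq.coprime_iff_not_dvd]
    intro h
    have h1 : l ^ d ≡ 0 [MOD q] := (Nat.modEq_zero_iff_dvd).2 (dvd_pow h hd.ne')
    have h2 := (hl.symm.trans h1)
    rw [Nat.modEq_zero_iff_dvd] at h2
    exact hq.one_lt.ne' (Nat.dvd_one.1 h2)
  obtain ⟨s, hs⟩ := exists_aut (F := F) (L := L) hN hζ' hlq
  have hspow : ∀ i : ℕ, (s ^ i) ζ' = ζ' ^ l ^ i := by
    intro i
    induction i with
    | zero => simp
    | succ i ih => rw [pow_succ, AlgEquiv.mul_apply, hs, map_pow, ih, ← pow_mul, pow_succ]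
  have hsd : s ^ d = 1 := by
    have h1 : (s ^ d) ζ' = ζ' := by
      rw [hspow]
      conv_rhs => rw [← pow_one ζ']
      exact pow_eq_pow_of_modEq hl hζ'.pow_eq_one
    have h2 : ((s ^ d : L ≃ₐ[F] L) : L →ₐ[F] L) = AlgHom.id F L :=
      (hζ'.powerBasis F).algHom_ext (by simpa using h1)
    ext y
    exact congrArg _ (DFunLike.congr_fun h2 y)
  have hpow : ∀ (i : ℕ) (x : L), ((s.toRingEquiv : L ≃+* L) ^ i) x = (s ^ i) x := by
    intro i
    induction i with
    | zero => intro x; rfl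
    | succ i ih => intro x; rw [pow_succ, pow_succ, AlgEquiv.mul_apply, ← ih]; rfl
  refine ⟨L.toSubfield, s.toRingEquiv, fun c => ?_, ?_, ?_, ?_, ?_⟩
  · exact ⟨(algebraMap ℚ_[q] L c).2, s.commutes (algebraMap ℚ_[q] F c)⟩
  · exact ⟨(algebraMap F L ω').2, s.commutes ω'⟩
  · exact ⟨ζ'.2, hs⟩
  · apply RingEquiv.ext
    intro x
    refine (hpow d x).trans ?_
    rw [hsd]; rfl
  · intro x hx
    refine dvd_of_norm_eq (F := F) (L := L) hN hζ' hω' hf hd hdq s x ?_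
    apply Subtype.ext
    refine Eq.trans ?_ hx
    refine congrArg Subtype.val ?_
    exact Finset.prod_congr rfl fun i _ => (hpow i x).symm

/-- An `f` such that `𝔽_{q^f}` contains the roots of unity of orders `p ^ (n - r)` and `p ^ r`, but
those of order `p ^ n` only if `𝔽_q` already does. If `s` is the `p`-adic valuation of `q - 1`, take
`f = p ^ (n - r - s)`, with truncated subtraction. By lifting the exponent `q ^ f - 1` has valuation
`max s (n - r)`; as `s ≥ r > 0`, this is less than `n` unless `s ≥ n`. -/
lemma exists_frobenius_exponent {p q n r : ℕ} (hp : p.Prime) (hq : q.Prime) (hpodd : Odd p) (hpq : p ≠ q)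
    (hr0 : 0 < r) (hrn : r ≤ n) (hrq : p ^ r ∣ q - 1) :
    ∃ f, p ^ (n - r) ∣ q ^ f - 1 ∧ p ^ r ∣ q ^ f - 1 ∧ (p ^ n ∣ q ^ f - 1 → p ^ n ∣ q - 1) := by
  have : Fact p.Prime := ⟨hp⟩
  have hq1 : q - 1 ≠ 0 := by have := hq.two_le; omega
  set s := padicValNat p (q - 1)
  have hpf : p ^ (n - r - s) ≠ 0 := pow_ne_zero _ hp.ne_zero
  have hv : padicValNat p (q ^ p ^ (n - r - s) - 1) = s + (n - r - s) := by
    have := padicValNat.pow_sub_pow (p := p) (x := q) (y := 1) hpodd hq.one_lt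
      ((dvd_pow_self p hr0.ne').trans hrq) (fun h => hpq ((Nat.prime_dvd_prime_iff_eq hp hq).1 h)) hpf
    rw [one_pow, padicValNat.prime_pow] at this
    exact this
  have hne : q ^ p ^ (n - r - s) - 1 ≠ 0 := by
    have := Nat.one_lt_pow hpf hq.one_lt
    omega
  refine ⟨p ^ (n - r - s), ?_, ?_, fun h => ?_⟩
  · rw [padicValNat_dvd_iff_le hne, hv]; omega
  · exact hrq.trans (by simpa using Nat.sub_dvd_pow_sub_pow q 1 (p ^ (n - r - s)))
  · rw [padicValNat_dvd_iff_le hne, hv] at h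
    rw [padicValNat_dvd_iff_le hq1]
    change n ≤ s
    omega

/-! ### From a realisation to a norm equation -/

/-- In characteristic zero a representation with the character of an irreducible one is isomorphic to it.
The target is not assumed irreducible: a nonzero intertwiner exists by counting dimensions of
`Hom` spaces, it is injective by irreducibility of the source, and the dimensions agree. -/
lemma exists_equivariant_equiv {G K V W : Type} [Group G] [Fintype G] [Field K] [CharZero K]
    [AddCommGroup V] [Module K V] [FiniteDimensional K V] [AddCommGroup W] [Module K W] [FiniteDimensional K W]
    [Nontrivial V]
    (ρ : G →* V →ₗ[K] V) (hirr : ∀ U : Submodule K V, (∀ g, ∀ w ∈ U, ρ g w ∈ U) → U = ⊥ ∨ U = ⊤)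
    (ρ' : G →* W →ₗ[K] W) (hχ : ∀ g, LinearMap.trace K W (ρ' g) = LinearMap.trace K V (ρ g)) :
    ∃ e : V ≃ₗ[K] W, ∀ g v, e (ρ g v) = ρ' g (e v) := by
  have hG : (Nat.card G : K) ≠ 0 := by exact_mod_cast Nat.card_pos.ne'
  let : Invertible (Nat.card G : K) := invertibleOfNonzero hG
  have h1 := Representation.card_inv_mul_sum_char_mul_char_eq_finrank (k := K) (G := G) ρ ρ'
  have h2 := Representation.card_inv_mul_sum_char_mul_char_eq_finrank (k := K) (G := G) ρ ρ
  have h3 : ∀ g, Representation.character (k := K) ρ' g = Representation.character (k := K) ρ g := hχ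
  simp only [h3] at h1
  rw [h1] at h2
  have h4 : Module.finrank K (Representation.IntertwiningMap (A := K) ρ ρ') =
      Module.finrank K (Representation.IntertwiningMap (A := K) ρ ρ) := by exact_mod_cast h2
  have hfin : Module.finrank K V = Module.finrank K W := by
    have := hχ 1
    rw [ρ'.map_one, ρ.map_one, LinearMap.trace_one, LinearMap.trace_one] at this
    exact_mod_cast this.symm
  have h5 : 0 < Module.finrank K (Representation.IntertwiningMap (A := K) ρ ρ) := by
    have : Nontrivial (Representation.IntertwiningMap (A := K) ρ ρ) := by
      refine ⟨⟨Representation.IntertwiningMap.id (A := K) ρ, 0, fun h => ?_⟩⟩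
      obtain ⟨v, hv⟩ := exists_ne (0 : V)
      exact hv (congrArg (fun φ => φ.toLinearMap v) h)
    have : Module.Finite K (Representation.IntertwiningMap (A := K) ρ ρ) := inferInstance
    exact Module.finrank_pos
  have : Nontrivial (Representation.IntertwiningMap (A := K) ρ ρ') :=
    Module.nontrivial_of_finrank_pos (R := K) (by rw [h4]; exact h5)
  obtain ⟨φ, hφ⟩ := exists_ne (0 : Representation.IntertwiningMap (A := K) ρ ρ')
  have hcomm : ∀ g v, φ.toLinearMap (ρ g v) = ρ' g (φ.toLinearMap v) := fun g v =>
    LinearMap.congr_fun (φ.isIntertwining' g) v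
  have hker : LinearMap.ker φ.toLinearMap = ⊥ := by
    rcases hirr (LinearMap.ker φ.toLinearMap) (by
      intro g w hw
      rw [LinearMap.mem_ker] at hw ⊢
      rw [hcomm, hw, map_zero]) with h | h
    · exact h
    · exfalso
      apply hφ
      rw [LinearMap.ker_eq_top] at h
      ext v
      exact LinearMap.congr_fun h v
  exact ⟨LinearEquiv.ofInjectiveOfFinrankEq φ.toLinearMap (LinearMap.ker_eq_bot.1 hker) hfin, hcomm⟩

/-- An endomorphism that is diagonal with distinct entries has eigenspaces of dimension at most one. -/
lemma exists_smul_of_eigen {K V : Type} [Field K] [AddCommGroup V] [Module K V] {d : ℕ}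
    (B : Module.Basis (Fin d) K V) (f : V →ₗ[K] V) (μ : Fin d → K) (hμ : Function.Injective μ)
    (hf : ∀ t, f (B t) = μ t • B t) {c : K} {y y' : V} (hy : f y = c • y) (hy' : f y' = c • y') (h0 : y' ≠ 0) :
    ∃ x : K, y = x • y' := by
  have hrepr : ∀ v t, B.repr (f v) t = μ t * B.repr v t := by
    intro v t
    have : (B.coord t) ∘ₗ f = μ t • B.coord t := by
      apply B.ext
      intro i
      simp only [LinearMap.comp_apply, hf, map_smul, LinearMap.smul_apply, Module.Basis.coord_apply,
        Module.Basis.repr_self, smul_eq_mul, Finsupp.single_apply]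
      split_ifs with h
      · rw [h]
      · simp
    exact LinearMap.congr_fun this v
  have hz : ∀ {v}, f v = c • v → ∀ t, B.repr v t ≠ 0 → μ t = c := by
    intro v hv t ht
    have := hrepr v t
    rw [hv, map_smul, Finsupp.smul_apply, smul_eq_mul] at this
    exact (mul_right_cancel₀ ht this).symm
  have : ∃ t, B.repr y' t ≠ 0 := by
    by_contra! h
    apply h0
    apply B.repr.injective
    ext t; simp [h t]
  obtain ⟨t0, ht0⟩ := this
  have hc := hz hy' t0 ht0
  refine ⟨B.repr y t0 / B.repr y' t0, ?_⟩
  apply B.repr.injective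
  ext t
  rw [map_smul, Finsupp.smul_apply, smul_eq_mul]
  by_cases ht : t = t0
  · subst ht; field_simp
  · have h1 : ∀ {v}, f v = c • v → B.repr v t = 0 := by
      intro v hv
      by_contra h
      exact ht (hμ ((hz hv t h).trans hc.symm))
    rw [h1 hy, h1 hy', mul_zero]

/-- Realisability gives a norm equation. Over `E`, the group acts by matrices fixed by `s`. Let `u` be a
`ζ`-eigenvector of `a` with coordinates in `L`. Then `b u` and `s u` (`s` acting on coordinates) are
both `ζ ^ l`-eigenvectors, hence `b u = x • s u` for some `x ∈ L`. Iterating `d` times,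
`ω • u = b ^ d u = x * s x * ⋯ * s ^ (d - 1) x • u`. -/
theorem exists_norm_equation {G : Type} [Group G] [Fintype G] {a b : G} {j l q d : ℕ}
    (ha : orderOf a = q) (hba : b * a * b⁻¹ = a ^ j) (hjl : j * l ≡ 1 [MOD q]) (hd : 0 < d)
    (hl : orderOf (l : ZMod q) = d)
    {K V : Type} [Field K] [CharZero K] [AddCommGroup V] [Module K V] [FiniteDimensional K V]
    (ρ : G →* V →ₗ[K] V) (hirr : ∀ U : Submodule K V, (∀ g, ∀ w ∈ U, ρ g w ∈ U) → U = ⊥ ∨ U = ⊤)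
    {w : V} {ζ ω : K} (hζ : IsPrimitiveRoot ζ q) (B : Module.Basis (Fin d) K V)
    (haw : ρ a w = ζ • w) (hB : ∀ t, B t = ρ (b ^ (t : ℕ)) w) (hω : ∀ v, ρ (b ^ d) v = ω • v)
    (L : Subfield K) (s : L ≃+* L) (hsζ : ∃ h : ζ ∈ L, s ⟨ζ, h⟩ = ⟨ζ, h⟩ ^ l) (hsd : s ^ d = 1)
    (E : Subfield K) (hE : ∀ c ∈ E, ∃ h : c ∈ L, s ⟨c, h⟩ = ⟨c, h⟩)
    {W : Type} [AddCommGroup W] [Module E W] [FiniteDimensional E W]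
    (σ : G →* W →ₗ[E] W)
    (hχ : ∀ g, algebraMap E K (LinearMap.trace E W (σ g)) = LinearMap.trace K V (ρ g)) :
    ∃ x : L, ((∏ i ∈ range d, (s ^ i) x : L) : K) = ω := by
  classical
  have : NeZero d := ⟨hd.ne'⟩
  have hw0 : w ≠ 0 := by
    have := B.ne_zero 0
    rwa [hB, Fin.val_zero, pow_zero, map_one, Module.End.one_apply] at this
  have : Nontrivial V := ⟨⟨w, 0, hw0⟩⟩
  let bE := Module.finBasis E W
  set m := Module.finrank E W
  have hEL : E ≤ L := fun c hc => (hE c hc).1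
  let ML : G →* Matrix (Fin m) (Fin m) L :=
    { toFun := fun g => (LinearMap.toMatrix bE bE (σ g)).map (Subfield.inclusion hEL)
      map_one' := by
        rw [map_one, LinearMap.toMatrix_one, Matrix.map_one _ (map_zero _) (map_one _)]
      map_mul' := by
        intro g h
        rw [map_mul, LinearMap.toMatrix_mul, Matrix.map_mul] }
  have hMs : ∀ g, (ML g).map s = ML g := by
    intro g
    ext i k
    exact congrArg Subtype.val (hE _ (LinearMap.toMatrix bE bE (σ g) i k).2).2
  let ρ' : G →* (Fin m → K) →ₗ[K] (Fin m → K) :=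
    { toFun := fun g => Matrix.toLin' ((ML g).map L.subtype)
      map_one' := by
        rw [map_one, Matrix.map_one _ (map_zero _) (map_one _), Matrix.toLin'_one]; rfl
      map_mul' := by
        intro g h
        rw [map_mul, Matrix.map_mul, Matrix.toLin'_mul]; rfl }
  have hχ' : ∀ g, LinearMap.trace K _ (ρ' g) = LinearMap.trace K V (ρ g) := by
    intro g
    rw [← hχ, LinearMap.trace_eq_matrix_trace E bE]
    change LinearMap.trace K _ (Matrix.toLin' _) = _
    rw [Matrix.trace_toLin'_eq]
    simp only [Matrix.trace, map_sum]
    rfl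
  obtain ⟨e, he⟩ := exists_equivariant_equiv ρ hirr ρ' hχ'
  let ι : (Fin m → L) → (Fin m → K) := fun v k => (v k : K)
  have hι : ∀ g v, ρ' g (ι v) = ι ((ML g).mulVec v) := by
    intro g v
    change Matrix.toLin' _ _ = _
    rw [Matrix.toLin'_apply]
    ext k
    exact (RingHom.map_mulVec L.subtype (ML g) v k).symm
  have hιs : ∀ (c : L) v, ι (c • v) = (c : K) • ι v := fun c v => rfl
  have hιinj : Function.Injective ι := by
    intro v v' h
    ext k
    exact congrFun h k
  have hι0 : ι 0 = 0 := rfl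
  obtain ⟨hζL, hsζ⟩ := hsζ
  set z : L := ⟨ζ, hζL⟩
  -- an eigenvector of `a` with coordinates in `L`
  have hew : ρ' a (e w) = ζ • e w := by rw [← he, haw, map_smul]
  have hdet : (ML a - Matrix.scalar (Fin m) z).det = 0 := by
    have h1 : ((ML a - Matrix.scalar (Fin m) z).map L.subtype).det = 0 := by
      rw [← Matrix.exists_mulVec_eq_zero_iff]
      refine ⟨e w, (LinearEquiv.map_ne_zero_iff e).2 hw0, ?_⟩
      have h2 : ((ML a).map L.subtype).mulVec (e w) = ζ • e w := by
        rw [← hew]; exact (Matrix.toLin'_apply _ _).symm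
      rw [Matrix.map_sub _ (map_sub L.subtype), Matrix.sub_mulVec, h2, sub_eq_zero]
      ext k
      simp [Matrix.scalar_apply, Matrix.diagonal_map, Matrix.mulVec_diagonal, z]
    have h2 := RingHom.map_det L.subtype (ML a - Matrix.scalar (Fin m) z)
    rw [RingHom.mapMatrix_apply, h1] at h2
    exact L.subtype.injective (by rw [h2, map_zero])
  obtain ⟨u, hu0, hu⟩ := Matrix.exists_mulVec_eq_zero_iff.2 hdet
  have hau : (ML a).mulVec u = z • u := by
    rw [Matrix.sub_mulVec, sub_eq_zero] at hu
    rw [hu]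
    ext k
    simp [Matrix.scalar_apply, Matrix.mulVec_diagonal]
  -- `s` acts coordinatewise and commutes with every `ML g`
  have hsM : ∀ g (v : Fin m → L), s ∘ (ML g).mulVec v = (ML g).mulVec (s ∘ v) := by
    intro g v
    ext1 k
    have := RingHom.map_mulVec (s : L →+* L) (ML g) v k
    refine this.trans ?_
    change (((ML g).map s).mulVec (s ∘ v)) k = _
    rw [hMs]
  have hsu : (ML a).mulVec (s ∘ u) = z ^ l • (s ∘ u) := by
    rw [← hsM, hau, ← hsζ]
    ext k; simp
  have hsu0 : s ∘ u ≠ 0 := by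
    intro h
    apply hu0
    ext1 k
    exact s.injective ((congrFun h k).trans (map_zero s).symm)
  have hMpow : ∀ i : ℕ, (ML (a ^ i)).mulVec u = z ^ i • u := by
    intro i
    induction i with
    | zero => simp
    | succ i ih =>
      rw [pow_succ, map_mul, ← Matrix.mulVec_mulVec, hau, Matrix.mulVec_smul, ih, smul_smul, pow_succ, mul_comm]
  have hbu : (ML a).mulVec ((ML b).mulVec u) = z ^ l • (ML b).mulVec u := by
    have h1 : a * b = b * a ^ l := by
      have := mul_pow_conj ha hba hjl 1 1
      simpa using this
    rw [Matrix.mulVec_mulVec, ← map_mul, h1, map_mul, ← Matrix.mulVec_mulVec, hMpow, Matrix.mulVec_smul]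
  -- eigenspaces of `a` are lines
  have hline : ∃ x : K, ι ((ML b).mulVec u) = x • ι (s ∘ u) := by
    have hρB : ∀ t, ρ a (B t) = ζ ^ (l ^ (t : ℕ)) • B t := by
      intro t
      have h1 := mul_pow_conj ha hba hjl t 1
      rw [pow_one, one_mul] at h1
      have h2 : ∀ i : ℕ, ρ (a ^ i) w = ζ ^ i • w := by
        intro i
        induction i with
        | zero => simp
        | succ i ih => rw [pow_succ, map_mul, Module.End.mul_apply, haw, map_smul, ih, smul_smul, pow_succ, mul_comm]
      rw [hB, ← Module.End.mul_apply, ← map_mul, h1, map_mul, Module.End.mul_apply, h2, map_smul]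
    have hinj : Function.Injective (fun t : Fin d => ζ ^ (l ^ (t : ℕ))) := by
      intro t t' h
      have h1 : (l ^ (t : ℕ)) ≡ (l ^ (t' : ℕ)) [MOD q] := by
        have hq0 : q ≠ 0 := by rw [← ha]; exact (orderOf_pos a).ne'
        have hz1 : ∀ i, ζ ^ i = ζ ^ (i % q) := fun i => by
          conv_lhs => rw [← Nat.div_add_mod i q, pow_add, pow_mul, hζ.pow_eq_one, one_pow, one_mul]
        simp only at h
        rw [hz1, hz1 (l ^ (t' : ℕ))] at h
        exact hζ.pow_inj (Nat.mod_lt _ (Nat.pos_of_ne_zero hq0)) (Nat.mod_lt _ (Nat.pos_of_ne_zero hq0)) h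
      rw [← ZMod.natCast_eq_natCast_iff] at h1
      push_cast at h1
      apply Fin.ext
      exact pow_injOn_Iio_orderOf (by simp [hl]) (by simp [hl]) h1
    have hc : ∀ v, (ML a).mulVec v = z ^ l • v → ρ a (e.symm (ι v)) = ζ ^ l • e.symm (ι v) := by
      intro v hv
      apply e.injective
      rw [he, e.apply_symm_apply, map_smul, e.apply_symm_apply, hι, hv, hιs]
      rfl
    obtain ⟨x, hx⟩ := exists_smul_of_eigen B (ρ a) _ hinj hρB (hc _ hbu) (hc _ hsu) (by
      rw [LinearEquiv.map_ne_zero_iff, ← hι0]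
      exact hιinj.ne hsu0)
    exact ⟨x, e.symm.injective (by rw [hx, map_smul])⟩
  obtain ⟨x, hx⟩ := hline
  obtain ⟨k0, hk0⟩ : ∃ k, s (u k) ≠ 0 := by
    by_contra! h
    exact hsu0 (funext h)
  have hk0' : ((s (u k0) : L) : K) ≠ 0 := fun h => hk0 (Subtype.ext h)
  have hxL : x ∈ L := by
    have h1 : (((ML b).mulVec u k0 : L) : K) = x * (s (u k0) : L) := congrFun hx k0
    have h2 : x = (((ML b).mulVec u k0 : L) : K) / (s (u k0) : L) := by
      rw [h1]; field_simp
    rw [h2]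
    exact L.div_mem (Subtype.prop _) (Subtype.prop _)
  have hbx : (ML b).mulVec u = (⟨x, hxL⟩ : L) • (s ∘ u) := hιinj hx
  refine ⟨⟨x, hxL⟩, ?_⟩
  set X : L := ⟨x, hxL⟩
  have hstep : ∀ i : ℕ, (ML b).mulVec ((s ^ i) ∘ u) = (s ^ i) X • ((s ^ (i + 1)) ∘ u) := by
    intro i
    induction i with
    | zero => simpa using hbx
    | succ i ih =>
      have h1 : ∀ i : ℕ, ((s ^ (i + 1) : L ≃+* L) : L → L) = s ∘ (s ^ i : L ≃+* L) := by
        intro i; rw [pow_succ']; rfl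
      rw [h1 i, Function.comp_assoc, ← hsM, ih, h1 (i + 1), h1 i]
      ext k; simp
  have hiter : ∀ i : ℕ, (ML (b ^ i)).mulVec u = (∏ k ∈ range i, (s ^ k) X) • ((s ^ i) ∘ u) := by
    intro i
    induction i with
    | zero => simp
    | succ i ih =>
      rw [pow_succ', map_mul, ← Matrix.mulVec_mulVec, ih, Matrix.mulVec_smul, hstep, smul_smul, prod_range_succ]
  have hfinal := hiter d
  rw [hsd] at hfinal
  have h1 : ρ' (b ^ d) (ι u) = ω • ι u := by
    have := he (b ^ d) (e.symm (ι u))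
    rw [hω, map_smul, e.apply_symm_apply] at this
    exact this.symm
  rw [hι, hfinal, hιs] at h1
  obtain ⟨k1, hk1⟩ : ∃ k, u k ≠ 0 := by
    by_contra! h
    exact hu0 (funext h)
  have h2 := congrFun h1 k1
  have hk1' : ((u k1 : L) : K) ≠ 0 := fun h => hk1 (Subtype.ext h)
  exact mul_right_cancel₀ hk1' h2

/-! ### The local criterion -/

lemma natCast_pow_eq_one_iff {q l d : ℕ} : (l : ZMod q) ^ d = 1 ↔ l ^ d ≡ 1 [MOD q] := by
  rw [← ZMod.natCast_eq_natCast_iff]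
  push_cast
  rfl

/-- An automorphism `s` sending `ζ` to `ζ ^ l` permutes the conjugates `ζ ^ (l ^ t)` cyclically,
hence fixes their power sums. -/
lemma conj_sum_fixed {K : Type} [Field K] {q l d : ℕ} {L : Subfield K} {s : L ≃+* L} {z : L}
    (hz : z ^ q = 1) (hs : s z = z ^ l) (hl : l ^ d ≡ 1 [MOD q]) (i : ℕ) :
    s (∑ t ∈ range d, z ^ (i * l ^ t)) = ∑ t ∈ range d, z ^ (i * l ^ t) := by
  have h1 : ∀ t, s (z ^ (i * l ^ t)) = z ^ (i * l ^ (t + 1)) := by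
    intro t
    rw [map_pow, hs, ← pow_mul]
    congr 1; ring
  rw [map_sum, sum_congr rfl fun t _ => h1 t]
  have h2 : z ^ (i * l ^ d) = z ^ (i * l ^ 0) := by
    apply pow_eq_pow_of_modEq _ hz
    rw [pow_zero]
    exact hl.mul_left i
  have h3 := sum_range_succ (fun t => z ^ (i * l ^ t)) d
  rw [sum_range_succ', h2] at h3
  exact add_right_cancel h3

/-- Being an element of `L` fixed by `s` passes from a set of generators to the subfield they generate. -/
lemma closure_fixed {K : Type} [Field K] {S : Set K} {L : Subfield K} {s : L ≃+* L}
    (hS : ∀ c ∈ S, ∃ h : c ∈ L, s ⟨c, h⟩ = ⟨c, h⟩) :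
    ∀ c ∈ Subfield.closure S, ∃ h : c ∈ L, s ⟨c, h⟩ = ⟨c, h⟩ := by
  let F : Subfield K := (RingHom.eqLocusField (s : L →+* L) (RingHom.id L)).map L.subtype
  have hF : ∀ c, c ∈ F ↔ ∃ h : c ∈ L, s ⟨c, h⟩ = ⟨c, h⟩ := by
    intro c
    rw [Subfield.mem_map]
    constructor
    · rintro ⟨x, hx, rfl⟩
      exact ⟨x.2, hx⟩
    · rintro ⟨h, hc⟩
      exact ⟨⟨c, h⟩, hc, rfl⟩
  intro c hc
  exact (hF c).1 (Subfield.closure_le.2 (fun x hx => (hF x).2 (hS x hx)) hc)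

/-- Let `p, q` be distinct odd primes, `G = C_q ⋊ C_{p^n}` non-abelian
(presented by `a, b` with `a^q = b^{p^n} = 1`, `b a b⁻¹ = a^j`, `j` of order `p^r` mod `q`).
Let `K` be an algebraically closed field of characteristic `0` containing `ℚ_q`, and `τ` a
faithful irreducible representation of `G` over `K`.  Then `τ` is realisable over the
subfield `ℚ_q(τ)` of `K` generated over `ℚ_q` by the values of the character of `τ` if and
only if `p^n ∣ q - 1`. -/
theorem local_schur_index_at_q
    (p q n r : ℕ) (hp : p.Prime) [Fact q.Prime] (hpodd : Odd p) (hqodd : Odd q)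
    (hpq : p ≠ q) (hn : 1 ≤ n) (hr0 : 0 < r) (hrn : r ≤ n) (hrdvd : p ^ r ∣ q - 1)
    (G : Type) [Group G] [Fintype G] (a b : G) (j : ℕ)
    (ha : orderOf a = q) (hb : orderOf b = p ^ n)
    (hba : b * a * b⁻¹ = a ^ j) (hj : orderOf (j : ZMod q) = p ^ r)
    (hgen : Subgroup.closure {a, b} = ⊤)
    (K : Type) [Field K] [IsAlgClosed K] [CharZero K] [Algebra ℚ_[q] K]
    (τ : FDRep K G) [Simple τ] (hτ : Function.Injective τ.ρ) :
    (∃ σ : FDRep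
        (Subfield.closure (Set.range (algebraMap ℚ_[q] K) ∪ Set.range τ.character)) G,
      ∀ g : G,
        algebraMap (Subfield.closure (Set.range (algebraMap ℚ_[q] K) ∪ Set.range τ.character)) K
          (σ.character g) = τ.character g) ↔
      p ^ n ∣ q - 1 := by
  have hq : q.Prime := Fact.out
  set d := p ^ r with hd_def
  have hd : 0 < d := pow_pos hp.pos r
  have hN0 : 0 < p ^ (n - r) := pow_pos hp.pos _
  have hdN : d * p ^ (n - r) = p ^ n := by rw [hd_def, ← pow_add, Nat.add_sub_cancel' hrn]
  -- `l` is an inverse of `j` modulo `q`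
  obtain ⟨l, hjl, hl⟩ : ∃ l : ℕ, j * l ≡ 1 [MOD q] ∧ orderOf (l : ZMod q) = d := by
    refine ⟨j ^ (d - 1), ?_, ?_⟩
    · rw [← pow_succ', Nat.sub_add_cancel hd, ← natCast_pow_eq_one_iff, ← hj]
      exact pow_orderOf_eq_one _
    · rw [Nat.cast_pow, Nat.Coprime.orderOf_pow, hj]
      rw [hj]
      exact (Nat.coprime_self_sub_right hd).2 (Nat.coprime_one_right _)
  have hld : l ^ d ≡ 1 [MOD q] := by
    rw [← natCast_pow_eq_one_iff, ← hl]; exact pow_orderOf_eq_one _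
  have hirr := FDRep.stable_eq_bot_or_top τ
  obtain ⟨w, ζ, ω, B, hζ, hω, haw, hB, hbd⟩ :=
    exists_model ha (hb.trans hdN.symm) hd hba hjl hl hgen τ.ρ hτ hirr
  obtain ⟨hχa, hχ⟩ := model_character ha hd hba hjl hgen τ.ρ B haw hB hbd
  constructor
  · rintro ⟨σ, hσ⟩
    obtain ⟨f, hf1, hf2, hf3⟩ := exists_frobenius_exponent hp hq hpodd hpq hr0 hrn hrdvd
    have hqN : ¬ q ∣ p ^ (n - r) := fun h =>
      hpq ((Nat.prime_dvd_prime_iff_eq hq hp).1 (hq.dvd_of_dvd_pow h)).symm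
    obtain ⟨L, s, hsc, ⟨hωL, hsω⟩, hsζ, hsd, hnorm⟩ :=
      exists_local_field hN0 hqN hω hζ hd hld hf1 hf2
    have hfix : ∀ c ∈ Subfield.closure (Set.range (algebraMap ℚ_[q] K) ∪ Set.range τ.character),
        ∃ h : c ∈ L, s ⟨c, h⟩ = ⟨c, h⟩ := by
      apply closure_fixed
      rintro c (⟨x, rfl⟩ | ⟨g, rfl⟩)
      · exact hsc x
      · change ∃ h : LinearMap.trace K τ (τ.ρ g) ∈ L, s ⟨LinearMap.trace K τ (τ.ρ g), h⟩ = ⟨_, h⟩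
        obtain ⟨hζL, hsζ⟩ := hsζ
        obtain ⟨y, hy, hsy⟩ : ∃ y : L, (y : K) = LinearMap.trace K τ (τ.ρ g) ∧ s y = y := by
          rcases hχ g with h | ⟨m, i, h⟩
          · exact ⟨0, h.symm, map_zero s⟩
          · refine ⟨⟨ω, hωL⟩ ^ m * ∑ t ∈ range d, ⟨ζ, hζL⟩ ^ (i * l ^ t), ?_, ?_⟩
            · rw [h]; push_cast; rfl
            · rw [map_mul, map_pow, hsω,
                conj_sum_fixed (Subtype.ext (by push_cast; exact hζ.pow_eq_one)) hsζ hld]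
        rw [← hy]
        exact ⟨y.2, hsy⟩
    obtain ⟨x, hx⟩ := exists_norm_equation ha hba hjl hd hl τ.ρ hirr hζ B haw hB hbd L s hsζ hsd
      _ hfix σ.ρ hσ
    exact hf3 (hdN ▸ hnorm x hx)
  · intro hdvd
    obtain ⟨σ, hσ⟩ := exists_realisation (M := p ^ n) hd (by rw [← hb]; exact pow_orderOf_eq_one b)
      hba hgen τ.ρ hirr B (fun t => ζ ^ (l ^ (t : ℕ)))
      (by
        intro t
        have h1 := mul_pow_conj ha hba hjl t 1
        rw [pow_one, one_mul] at h1
        have h2 : ∀ i : ℕ, τ.ρ (a ^ i) w = ζ ^ i • w := by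
          intro i
          induction i with
          | zero => simp
          | succ i ih =>
            rw [pow_succ, map_mul, Module.End.mul_apply, haw, map_smul, ih, smul_smul,
              pow_succ, mul_comm]
        rw [hB, ← Module.End.mul_apply, ← map_mul, h1, map_mul, Module.End.mul_apply, h2, map_smul])
      (Subfield.closure (Set.range (algebraMap ℚ_[q] K) ∪ Set.range τ.character))
      (by
        intro i
        have h1 : ∑ t : Fin d, (ζ ^ (l ^ (t : ℕ))) ^ i = τ.character (a ^ i) := by
          refine Eq.trans ?_ (hχa i).symm
          rw [sum_range]
          refine sum_congr rfl fun t _ => ?_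
          rw [← pow_mul, mul_comm]
        rw [h1]
        exact Subfield.subset_closure (Or.inr ⟨_, rfl⟩))
      (by
        intro μ hμ
        refine Subfield.subset_closure (Or.inl (rootsOfUnity_mem_padic ?_))
        obtain ⟨c, hc⟩ := hdvd
        rw [hc, pow_mul, hμ, one_pow])
    exact ⟨FDRep.of σ, hσ⟩
end

section
/- Let p and q be distinct odd primes with q ≡ 1 (mod p), and let n ≥ r ≥ 1 be integers. Fix an algebraic closure of the q-adic field ℚ_q, and let ζ_{p^n} and ζ_{p^{n−r}} denote primitive p^n-th and p^{n−r}-th roots of unity in it. Then ζ_{p^n} lies in the subfield ℚ_q(ζ_{p^{n−r}}) if and only if p^n divides q−1. -/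
/-!
Write `q - 1 = p ^ m * c` with `p ∤ c`. The roots of unity of `p`-power order in `ℚ_q` are governed
by reduction modulo `q`: by Hensel's lemma `ℚ_q` contains a primitive `N`-th root of unity, for `N`
prime to `q`, exactly when the cyclic group `𝔽_qˣ` has an element of order `N`, i.e. when
`N ∣ q - 1` (`exists_isPrimitiveRoot_padic_iff`). In particular, if `p ^ n ∣ q - 1` then `ζ_{p^n}`
already lies in `ℚ_q`.

Conversely suppose `p ^ n ∤ q - 1`, i.e. `m < n`. For every `k`, the element
`ζ_{p^k} ^ p ^ (k - m)` (truncated subtraction) is a `p ^ m`-th root of unity, hence lies in `ℚ_q`,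
so `ζ_{p^k}` has degree at most `p ^ (k - m)` over `ℚ_q`. For `k = n` this is an equality:
`a = ζ_{p^n} ^ p ^ (n - m)` is a primitive `p ^ m`-th root of unity with `m ≥ 1`, so a `p`-th root
of it in `ℚ_q` would be a primitive `p ^ (m + 1)`-th root of unity, which does not exist; as `p` is
odd, `X ^ p ^ (n - m) - a` is then irreducible. Since `p ^ (n - r - m) < p ^ (n - m)`, the element
`ζ_{p^n}` has too large a degree to lie in `ℚ_q(ζ_{p^{n-r}})`.
-/

open Polynomial in
/-- Reduction modulo `q` preserves primitive `N`-th roots of unity because `N` is invertible in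
`𝔽_q`; conversely a primitive root in `𝔽_q` lifts by Hensel's lemma applied to `X ^ N - 1`. -/
theorem exists_isPrimitiveRoot_padic_iff (q N : ℕ) [Fact q.Prime] (hN : ¬ q ∣ N) :
    (∃ x : ℚ_[q], IsPrimitiveRoot x N) ↔ N ∣ q - 1 := by
  have hN0 : N ≠ 0 := fun h => hN (h ▸ dvd_zero q)
  have hNZ : (N : ZMod q) ≠ 0 := by rwa [Ne, ZMod.natCast_eq_zero_iff]
  constructor
  · rintro ⟨x, hx⟩
    have hnorm : ‖x‖ = 1 :=
      (pow_eq_one_iff_of_nonneg (norm_nonneg x) hN0).1 (by rw [← norm_pow, hx.pow_eq_one, norm_one])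
    set y : ℤ_[q] := ⟨x, hnorm.le⟩ with hy
    have hyp : IsPrimitiveRoot y N := by
      refine IsPrimitiveRoot.of_map_of_injective (f := PadicInt.Coe.ringHom (p := q)) ?_
        Subtype.val_injective
      exact hx
    have : NeZero (N : ℤ_[q]) := ⟨by exact_mod_cast hN0⟩
    have : NeZero (N : ZMod q) := ⟨hNZ⟩
    -- The cyclotomic polynomial detects primitive roots in `𝔽_q` since `N ≠ 0` there.
    have h1 : IsRoot (cyclotomic N ℤ_[q]) y := isRoot_cyclotomic_iff.2 hyp
    have h2 := h1.map (f := PadicInt.toZMod)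
    rw [map_cyclotomic, isRoot_cyclotomic_iff] at h2
    refine h2.dvd_of_pow_eq_one _ (ZMod.pow_card_sub_one_eq_one ?_)
    exact h2.ne_zero hN0
  · rintro ⟨c, hc⟩
    obtain ⟨g, hg⟩ := IsCyclic.exists_generator (α := (ZMod q)ˣ)
    have hord : orderOf g = q - 1 := by
      rw [orderOf_eq_card_of_forall_mem_zpowers hg, Nat.card_eq_fintype_card, ZMod.card_units]
    have hq1 : 0 < q - 1 := Nat.sub_pos_of_lt (Fact.out : q.Prime).one_lt
    have hprim : IsPrimitiveRoot (((g ^ c : (ZMod q)ˣ)) : ZMod q) N := by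
      rw [IsPrimitiveRoot.coe_units_iff]
      exact (hord ▸ IsPrimitiveRoot.orderOf g).pow hq1 (by rw [hc, mul_comm])
    obtain ⟨a, ha⟩ := ZMod.ringHom_surjective (PadicInt.toZMod (p := q))
      ((g ^ c : (ZMod q)ˣ) : ZMod q)
    rw [← ha] at hprim
    have hker : ∀ z : ℤ_[q], ‖z‖ < 1 ↔ PadicInt.toZMod z = 0 := fun z => by
      rw [← RingHom.mem_ker, PadicInt.ker_toZMod, IsLocalRing.mem_maximalIdeal,
        PadicInt.mem_nonunits]
    have hF : ‖(X ^ N - 1 : ℤ_[q][X]).aeval a‖ < 1 := by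
      rw [hker]; simp [hprim.pow_eq_one]
    have hF' : ‖(X ^ N - 1 : ℤ_[q][X]).derivative.aeval a‖ = 1 := by
      refine le_antisymm (PadicInt.norm_le_one _) (not_lt.1 ?_)
      rw [hker]
      simp [derivative_X_pow, hNZ, hprim.ne_zero hN0]
    obtain ⟨z, hz, hza, -⟩ := hensels_lemma (F := (X ^ N - 1 : ℤ_[q][X])) (a := a)
      (by rw [hF']; simpa using hF)
    rw [hF', hker, map_sub, sub_eq_zero] at hza
    have hz1 : z ^ N = 1 := by simpa [sub_eq_zero] using hz
    have hzp : IsPrimitiveRoot z N := by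
      refine ⟨hz1, fun l hl => hprim.dvd_of_pow_eq_one l ?_⟩
      rw [← hza, ← map_pow, hl, map_one]
    exact ⟨z, hzp.map_of_injective (f := PadicInt.Coe.ringHom (p := q)) Subtype.val_injective⟩

/-- If a field contains a primitive `N`-th root of unity, then it contains all `N`-th roots of unity
of any extension. -/
theorem exists_algebraMap_eq_of_pow_eq_one {F K : Type*} [Field F] [Field K] [Algebra F K]
    {N : ℕ} (hN : N ≠ 0) {ω : F} (hω : IsPrimitiveRoot ω N) {x : K} (hx : x ^ N = 1) :
    ∃ y : F, algebraMap F K y = x := by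
  have : NeZero N := ⟨hN⟩
  obtain ⟨i, -, hi⟩ :=
    (hω.map_of_injective (algebraMap F K).injective).eq_pow_of_pow_eq_one hx
  exact ⟨ω ^ i, by rw [map_pow, hi]⟩

/-- Let `p, q` be distinct odd primes with `q ≡ 1 (mod p)` and let
`n ≥ r ≥ 1`.  Fix an algebraic closure `K` of `ℚ_q` and primitive `p^n`-th and
`p^{n-r}`-th roots of unity `ζ_{p^n}, ζ_{p^{n-r}}` in `K`.  Then
`ζ_{p^n} ∈ ℚ_q(ζ_{p^{n-r}})` if and only if `p^n ∣ q - 1`. -/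
theorem primitive_root_mem_adjoin_iff
    (p q n r : ℕ) (hp : p.Prime) [Fact q.Prime] (hpodd : Odd p) (hqodd : Odd q)
    (hpq : p ≠ q) (hqmod : p ∣ q - 1) (hr : 1 ≤ r) (hrn : r ≤ n)
    (K : Type) [Field K] [Algebra ℚ_[q] K] [IsAlgClosure ℚ_[q] K]
    (ζn ζnr : K) (hζn : IsPrimitiveRoot ζn (p ^ n))
    (hζnr : IsPrimitiveRoot ζnr (p ^ (n - r))) :
    ζn ∈ IntermediateField.adjoin ℚ_[q] {ζnr} ↔ p ^ n ∣ q - 1 := by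
  have hq : q.Prime := Fact.out
  have hnd : ∀ k, ¬ q ∣ p ^ k := fun k h =>
    hpq ((Nat.prime_dvd_prime_iff_eq hq hp).1 (hq.dvd_of_dvd_pow h)).symm
  have hq1 : q - 1 ≠ 0 := (Nat.sub_pos_of_lt hq.one_lt).ne'
  constructor
  · intro hmem
    by_contra hndvd
    obtain ⟨m, c, hpc, hqc⟩ := Nat.exists_eq_pow_mul_and_not_dvd hq1 p hp.ne_one
    have hm1 : ¬ p ^ (m + 1) ∣ q - 1 := by
      rw [hqc, pow_succ, Nat.mul_dvd_mul_iff_left (pow_pos hp.pos m)]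
      exact hpc
    have hm0 : 1 ≤ m := by
      by_contra h
      obtain rfl : m = 0 := by omega
      exact hm1 (by simpa using hqmod)
    have hmn : m < n := by
      by_contra h
      exact hndvd ((pow_dvd_pow p (not_lt.1 h)).trans ⟨c, hqc⟩)
    obtain ⟨ω, hω⟩ := (exists_isPrimitiveRoot_padic_iff q (p ^ m) (hnd m)).2 ⟨c, hqc⟩
    have hpm : p ^ m ≠ 0 := (pow_pos hp.pos m).ne'
    have hbase : ∀ k (x : K), x ^ p ^ k = 1 →
        ∃ a : ℚ_[q], algebraMap ℚ_[q] K a = x ^ p ^ (k - m) := fun k x hx => by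
      refine exists_algebraMap_eq_of_pow_eq_one hpm hω ?_
      rw [← pow_mul, ← pow_add]
      obtain ⟨d, hd⟩ := pow_dvd_pow p (show k ≤ k - m + m by omega)
      rw [hd, pow_mul, hx, one_pow]
    obtain ⟨a, ha⟩ := hbase n ζn hζn.pow_eq_one
    obtain ⟨b, hb⟩ := hbase (n - r) ζnr hζnr.pow_eq_one
    have haprim : IsPrimitiveRoot a (p ^ m) := by
      refine IsPrimitiveRoot.of_map_of_injective (f := algebraMap ℚ_[q] K) ?_
        (algebraMap ℚ_[q] K).injective
      rw [ha]
      exact hζn.pow (pow_pos hp.pos n) (by rw [← pow_add]; congr 1; omega)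
    have hnotpow : ∀ t : ℚ_[q], t ^ p ≠ a := by
      rintro t rfl
      refine hm1 ((exists_isPrimitiveRoot_padic_iff q _ (hnd (m + 1))).1 ⟨t, ?_⟩)
      have : Fact p.Prime := ⟨hp⟩
      rw [IsPrimitiveRoot.iff_orderOf]
      refine orderOf_eq_prime_pow (fun h => ?_) ?_
      · refine haprim.pow_ne_one_of_pos_of_lt (l := p ^ (m - 1)) (pow_pos hp.pos _).ne'
          (Nat.pow_lt_pow_right hp.one_lt (by omega)) ?_
        rw [← pow_mul, ← pow_succ', Nat.sub_add_cancel hm0, h]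
      · rw [pow_succ', pow_mul, haprim.pow_eq_one]
    have hirr := X_pow_sub_C_irreducible_of_prime_pow hp
      (fun h => by subst h; exact absurd hpodd (by decide)) (n - m) hnotpow
    have hmonic : ∀ k (a : ℚ_[q]), (Polynomial.X ^ p ^ k - Polynomial.C a).Monic := fun k a =>
      Polynomial.monic_X_pow_sub_C a (pow_pos hp.pos k).ne'
    have hdegn : (minpoly ℚ_[q] ζn).natDegree = p ^ (n - m) := by
      rw [← minpoly.eq_of_irreducible_of_monic hirr (by simp [ha]) (hmonic _ _),
        Polynomial.natDegree_X_pow_sub_C]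
    have hroot : Polynomial.aeval ζnr
        (Polynomial.X ^ p ^ (n - r - m) - Polynomial.C b) = 0 := by simp [hb]
    have hint : IsIntegral ℚ_[q] ζnr := ⟨_, hmonic _ _, hroot⟩
    have hdegnr : (minpoly ℚ_[q] ζnr).natDegree ≤ p ^ (n - r - m) := by
      refine (Polynomial.natDegree_le_of_dvd (minpoly.dvd _ _ hroot)
        (hmonic _ _).ne_zero).trans ?_
      rw [Polynomial.natDegree_X_pow_sub_C]
    have := IntermediateField.adjoin.finiteDimensional hint
    have hle : (minpoly ℚ_[q] ζn).natDegree ≤ (minpoly ℚ_[q] ζnr).natDegree := by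
      rw [← IntermediateField.adjoin.finrank hint]
      have h := minpoly.natDegree_le (A := ℚ_[q])
        (⟨ζn, hmem⟩ : IntermediateField.adjoin ℚ_[q] {ζnr})
      rwa [IntermediateField.minpoly_eq] at h
    have hlt : p ^ (n - r - m) < p ^ (n - m) := Nat.pow_lt_pow_right hp.one_lt (by omega)
    omega
  · intro hdvd
    obtain ⟨ω, hω⟩ := (exists_isPrimitiveRoot_padic_iff q (p ^ n) (hnd n)).2 hdvd
    obtain ⟨y, rfl⟩ := exists_algebraMap_eq_of_pow_eq_one (pow_pos hp.pos n).ne' hω hζn.pow_eq_one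
    exact IntermediateField.algebraMap_mem _ y
end

section
/- Let q be a prime, ζ_q ∈ ℂ a primitive q-th root of unity, f ∈ ℚ[X] a polynomial, and x an integer not divisible by q. Then f(ζ_q^x) lies in the field ℚ(f(ζ_q)). In particular, for any subgroup H of (ℤ/qℤ)^× and any x with q ∤ x, the Gaussian period Σ_{t∈H} ζ_q^{xt} lies in ℚ(Σ_{t∈H} ζ_q^t). -/
/-!
The extension `ℚ(ζ)/ℚ` is abelian: an automorphism is determined by the exponent through which it
acts on `ζ`, so its Galois group embeds into `(ℤ/qℤ)ˣ`. The number `f(ζ^x)` is `σ (f(ζ))` for the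
automorphism `σ` with `σ ζ = ζ^x`, which exists because the cyclotomic polynomial is irreducible
over `ℚ`. If `τ` fixes `f(ζ)`, then `τ σ f(ζ) = σ τ f(ζ) = σ f(ζ)`, so `τ` fixes `f(ζ^x)` as well;
by the Galois correspondence `f(ζ^x) ∈ ℚ(f(ζ))`. Gaussian periods are the case
`f = ∑_{t ∈ H} X^t`.
-/

open Finset

open IntermediateField in
/-- In a finite abelian extension every conjugate `σ a` of `a` lies in `K(a)`. -/
theorem algEquiv_apply_mem_adjoin {K L : Type*} [Field K] [Field L] [Algebra K L]
    [FiniteDimensional K L] [IsGalois K L] (hcomm : ∀ σ τ : L ≃ₐ[K] L, σ * τ = τ * σ)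
    (σ : L ≃ₐ[K] L) (a : L) : σ a ∈ K⟮a⟯ := by
  rw [← IsGalois.fixedField_fixingSubgroup K⟮a⟯, IntermediateField.mem_fixedField_iff]
  intro τ hτ
  have ha : τ a = a :=
    (IntermediateField.mem_fixingSubgroup_iff _ τ).1 hτ a (mem_adjoin_simple_self K a)
  calc τ (σ a) = (τ * σ) a := rfl
    _ = (σ * τ) a := by rw [hcomm]
    _ = σ a := congrArg σ ha

/-- The field `ℚ(a)`, as an intermediate field, is contained in the subfield of `L` generated by
`a`, since the latter contains `ℚ`. -/
theorem mem_closure_of_mem_adjoin_rat {L : Type*} [Field L] [Algebra ℚ L] {a b : L}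
    (hb : b ∈ IntermediateField.adjoin ℚ {a}) : b ∈ Subfield.closure {a} := by
  change b ∈ Subfield.closure (Set.range (algebraMap ℚ L) ∪ {a}) at hb
  refine Subfield.closure_le.2 (Set.union_subset ?_ Subfield.subset_closure) hb
  rintro _ ⟨r, rfl⟩
  rw [eq_ratCast]
  exact SubfieldClass.ratCast_mem _ r

open IntermediateField in
/-- The membership `f(ζ^u) ∈ ℚ(f(ζ))` for a unit exponent `u`. -/
theorem aeval_pow_unit_mem {q : ℕ} [NeZero q] {ζ : ℂ} (hζ : IsPrimitiveRoot ζ q)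
    (f : Polynomial ℚ) (u : (ZMod q)ˣ) :
    Polynomial.aeval (ζ ^ (u : ZMod q).val) f ∈ Subfield.closure {Polynomial.aeval ζ f} := by
  have : IsCyclotomicExtension {q} ℚ ℚ⟮ζ⟯ := by
    change IsCyclotomicExtension {q} ℚ ℚ⟮ζ⟯.toSubalgebra
    have hint : IsIntegral ℚ ζ := (hζ.isIntegral (NeZero.pos q)).tower_top
    rw [IntermediateField.adjoin_simple_toSubalgebra_of_isAlgebraic hint.isAlgebraic]
    exact hζ.adjoin_isCyclotomicExtension ℚ
  have : FiniteDimensional ℚ ℚ⟮ζ⟯ := IsCyclotomicExtension.finiteDimensional {q} ℚ _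
  have : IsGalois ℚ ℚ⟮ζ⟯ := IsCyclotomicExtension.isGalois {q} ℚ _
  let z : ℚ⟮ζ⟯ := AdjoinSimple.gen ℚ ζ
  have hz : IsPrimitiveRoot z q := by
    refine IsPrimitiveRoot.of_map_of_injective (f := ℚ⟮ζ⟯.val) ?_ ℚ⟮ζ⟯.val.injective
    exact hζ
  have hcomm : ∀ σ τ : ℚ⟮ζ⟯ ≃ₐ[ℚ] ℚ⟮ζ⟯, σ * τ = τ * σ := fun σ τ =>
    hz.autToPow_injective ℚ (by rw [map_mul, map_mul, mul_comm])
  have hirr : Irreducible (Polynomial.cyclotomic q ℚ) :=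
    Polynomial.cyclotomic.irreducible_rat (NeZero.pos q)
  obtain ⟨σ, hσ⟩ : ∃ σ : ℚ⟮ζ⟯ ≃ₐ[ℚ] ℚ⟮ζ⟯, σ z = z ^ (u : ZMod q).val := by
    obtain ⟨σ, hσ⟩ := (IsCyclotomicExtension.autEquivPow ℚ⟮ζ⟯ hirr).surjective u
    -- `autEquivPow` refers to Mathlib's chosen root `zeta`, of which `z` is a power.
    have hs := (IsCyclotomicExtension.zeta_spec q ℚ ℚ⟮ζ⟯).autToPow_spec ℚ σ
    change _ ^ ((IsCyclotomicExtension.autEquivPow ℚ⟮ζ⟯ hirr σ : (ZMod q)ˣ) : ZMod q).val = _ at hs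
    rw [hσ] at hs
    obtain ⟨i, -, hi⟩ :=
      (IsCyclotomicExtension.zeta_spec q ℚ ℚ⟮ζ⟯).eq_pow_of_pow_eq_one hz.pow_eq_one
    refine ⟨σ, ?_⟩
    rw [← hi, map_pow, ← hs, ← pow_mul, ← pow_mul, mul_comm]
  have key := algEquiv_apply_mem_adjoin hcomm σ (Polynomial.aeval z f)
  rw [← Polynomial.aeval_algHom_apply, hσ] at key
  -- Descend to subfields before mapping into `ℂ`, since these do not depend on the choice of
  -- `ℚ`-algebra structure on `ℚ⟮ζ⟯`.
  have hmap := (Subfield.mem_map (f := (ℚ⟮ζ⟯.val : ℚ⟮ζ⟯ →+* ℂ))).2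
    ⟨_, mem_closure_of_mem_adjoin_rat key, rfl⟩
  rw [RingHom.map_field_closure, Set.image_singleton] at hmap
  have hval (y : ℚ⟮ζ⟯) : (ℚ⟮ζ⟯.val : ℚ⟮ζ⟯ →+* ℂ) (Polynomial.aeval y f) =
      Polynomial.aeval (y : ℂ) f := (Polynomial.aeval_algHom_apply ℚ⟮ζ⟯.val y f).symm
  rw [hval, hval] at hmap
  exact hmap

/-- Let `q` be a prime, `ζ_q ∈ ℂ` a primitive `q`-th root of unity,
`f ∈ ℚ[X]` and `x` an integer not divisible by `q`.  Then `f(ζ_q^x) ∈ ℚ(f(ζ_q))`.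
In particular, for any subgroup `H` of `(ℤ/qℤ)ˣ`, the Gaussian period
`∑_{t ∈ H} ζ_q^{xt}` lies in `ℚ(∑_{t ∈ H} ζ_q^t)`.  Here `ℚ(α)` is formalised as the
subfield of `ℂ` generated by `α` (every subfield of `ℂ` contains `ℚ`). -/
theorem aeval_primitive_root_pow_mem
    (q : ℕ) (hq : q.Prime) [NeZero q] (ζq : ℂ) (hζq : IsPrimitiveRoot ζq q)
    (f : Polynomial ℚ) (x : ℤ) (hx : ¬ (q : ℤ) ∣ x) :
    Polynomial.aeval (ζq ^ x) f ∈ Subfield.closure {Polynomial.aeval ζq f} ∧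
      ∀ (H : Subgroup (ZMod q)ˣ) [Fintype H],
        (∑ t : H, ζq ^ (x * (((t : (ZMod q)ˣ) : ZMod q)).val)) ∈
          Subfield.closure {∑ t : H, ζq ^ ((((t : (ZMod q)ˣ) : ZMod q)).val : ℤ)} := by
  have : Fact q.Prime := ⟨hq⟩
  have main (f : Polynomial ℚ) :
      Polynomial.aeval (ζq ^ x) f ∈ Subfield.closure {Polynomial.aeval ζq f} := by
    have hx0 : (x : ZMod q) ≠ 0 := by rwa [Ne, ZMod.intCast_zmod_eq_zero_iff_dvd]
    have hpow : ζq ^ x = ζq ^ (x : ZMod q).val := by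
      rw [← zpow_natCast, ZMod.val_intCast]
      conv_lhs => rw [← Int.mul_ediv_add_emod x q, zpow_add₀ (hζq.ne_zero hq.ne_zero), zpow_mul,
        zpow_natCast, hζq.pow_eq_one, one_zpow, one_mul]
    rw [hpow]
    exact aeval_pow_unit_mem hζq f (Units.mk0 _ hx0)
  refine ⟨main f, fun H _ => ?_⟩
  have h := main (∑ t : H, Polynomial.X ^ (((t : (ZMod q)ˣ) : ZMod q)).val)
  simpa only [map_sum, map_pow, Polynomial.aeval_X, zpow_mul, zpow_natCast] using h
end

section
/- The subgroup X = ⟨a, b^{p^r}⟩ of G is a normal abelian subgroup that equals its own centralizer: C_G(X) = X. Moreover X is the centralizer in G of the subgroup ⟨a⟩ ≅ C_q. -/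
/-!
Conjugation by `b ^ k` sends `a` to `a ^ (j ^ k)`, so `b ^ k` commutes with `a` exactly when
`j ^ k = 1` modulo `q`, that is, when `p ^ r ∣ k` (`pow_commute_iff_dvd`). Hence `b ^ p ^ r` is
central and `X = ⟨a, b ^ p ^ r⟩` is abelian. Conversely, `⟨a⟩` is normal, so every element of `G`
has the form `a ^ i * b ^ k`; if it centralizes `a`, so does `b ^ k`, and then `p ^ r ∣ k`
puts the element in `X`. Therefore `X ≤ C(X) ≤ C(⟨a⟩) ≤ X`, and `X = C(⟨a⟩)` is normal as the
centralizer of a normal subgroup.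
-/

theorem pow_conj_eq_pow_pow {G : Type} [Group G] {a b : G} {j : ℕ}
    (hba : b * a * b⁻¹ = a ^ j) (k : ℕ) : b ^ k * a * (b ^ k)⁻¹ = a ^ (j ^ k) := by
  induction k with
  | zero => simp
  | succ k ih =>
    calc b ^ (k + 1) * a * (b ^ (k + 1))⁻¹
        = b * (b ^ k * a * (b ^ k)⁻¹) * b⁻¹ := by rw [pow_succ']; group
      _ = (b * a * b⁻¹) ^ (j ^ k) := by rw [ih, conj_pow]
      _ = a ^ (j ^ (k + 1)) := by rw [hba, ← pow_mul, pow_succ']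

theorem pow_commute_iff_dvd {G : Type} [Group G] {a b : G} {j : ℕ}
    (hba : b * a * b⁻¹ = a ^ j) (k : ℕ) :
    b ^ k * a = a * b ^ k ↔ orderOf (j : ZMod (orderOf a)) ∣ k := by
  rw [← mul_inv_eq_iff_eq_mul, pow_conj_eq_pow_pow hba, orderOf_dvd_iff_pow_eq_one]
  conv_lhs => rhs; rw [← pow_one a]
  rw [pow_eq_pow_iff_modEq, ← ZMod.natCast_eq_natCast_iff]
  simp

theorem zpowers_normal_of_conj {G : Type} [Group G] [Finite G] {a b : G} {j : ℕ}
    (hba : b * a * b⁻¹ = a ^ j) (hgen : Subgroup.closure {a, b} = ⊤) :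
    (Subgroup.zpowers a).Normal := by
  rw [← Subgroup.normalizer_eq_top_iff, eq_top_iff, ← hgen, Subgroup.closure_le]
  rintro x (rfl | rfl)
  · exact Subgroup.le_normalizer (Subgroup.mem_zpowers x)
  · -- by finiteness it suffices that conjugation by `b` maps `⟨a⟩` into itself
    refine Subgroup.mem_normalizer_fintype ?_
    rintro _ ⟨i, rfl⟩
    simp only [SetLike.mem_coe]
    rw [← conj_zpow, hba]
    exact zpow_mem (pow_mem (Subgroup.mem_zpowers a) j) i

/-- Let `p, q` be distinct odd primes, `G = C_q ⋊ C_{p^n}` non-abelian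
(presented by `a, b` with `a^q = b^{p^n} = 1`, `b a b⁻¹ = a^j`, `j` of order `p^r` mod `q`).
The subgroup `X = ⟨a, b^{p^r}⟩` of `G` is a normal abelian subgroup equal to its own
centraliser, and it is moreover the centraliser in `G` of the subgroup `⟨a⟩ ≅ C_q`. -/
theorem X_normal_abelian_self_centralizing
    (p q n r : ℕ) (hp : p.Prime) (hq : q.Prime) (hpodd : Odd p) (hqodd : Odd q)
    (hpq : p ≠ q) (hn : 1 ≤ n) (hr0 : 0 < r) (hrn : r ≤ n) (hrdvd : p ^ r ∣ q - 1)
    (G : Type) [Group G] [Fintype G] (a b : G) (j : ℕ)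
    (ha : orderOf a = q) (hb : orderOf b = p ^ n)
    (hba : b * a * b⁻¹ = a ^ j) (hj : orderOf (j : ZMod q) = p ^ r)
    (hgen : Subgroup.closure {a, b} = ⊤) :
    (Subgroup.closure {a, b ^ p ^ r} : Subgroup G).Normal ∧
      (∀ x ∈ Subgroup.closure {a, b ^ p ^ r}, ∀ y ∈ Subgroup.closure {a, b ^ p ^ r},
        x * y = y * x) ∧
      Subgroup.centralizer ((Subgroup.closure {a, b ^ p ^ r} : Subgroup G) : Set G) =
        Subgroup.closure {a, b ^ p ^ r} ∧
      Subgroup.centralizer ((Subgroup.zpowers a : Subgroup G) : Set G) =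
        Subgroup.closure {a, b ^ p ^ r} := by
  have hcomm (k : ℕ) : b ^ k * a = a * b ^ k ↔ p ^ r ∣ k := by
    subst ha
    rw [pow_commute_iff_dvd hba, hj]
  have hN := zpowers_normal_of_conj hba hgen
  set X := Subgroup.closure {a, b ^ p ^ r} with hX
  have haX : a ∈ X := Subgroup.subset_closure (by simp)
  have hbX : b ^ p ^ r ∈ X := Subgroup.subset_closure (by simp)
  have hab : b ^ p ^ r * a = a * b ^ p ^ r := (hcomm _).2 dvd_rfl
  have habel : X ≤ Subgroup.centralizer (X : Set G) := by
    rw [hX, Subgroup.centralizer_closure, Subgroup.closure_le]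
    simp [Set.insert_subset_iff, Subgroup.mem_centralizer_iff, hab]
  have hanti : Subgroup.centralizer (X : Set G) ≤
      Subgroup.centralizer (Subgroup.zpowers a : Set G) :=
    Subgroup.centralizer_le (Subgroup.zpowers_le.2 haX)
  have hle : Subgroup.centralizer (Subgroup.zpowers a : Set G) ≤ X := by
    intro g hg
    have hga : a * g = g * a :=
      Subgroup.mem_centralizer_iff.1 hg a (Subgroup.mem_zpowers a)
    have hsup : g ∈ Subgroup.zpowers a ⊔ Subgroup.zpowers b := by
      rw [Subgroup.zpowers_eq_closure, Subgroup.zpowers_eq_closure, ← Subgroup.closure_union,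
        Set.singleton_union, hgen]
      trivial
    obtain ⟨x, ⟨i, rfl⟩, y, hy, rfl⟩ := Subgroup.mem_sup_of_normal_left.1 hsup
    obtain ⟨k, rfl⟩ := mem_powers_iff_mem_zpowers.2 hy
    have hk : Commute a (b ^ k) := by
      have h := ((Commute.refl a).zpow_right (-i)).mul_right (show Commute a _ from hga)
      simpa using h
    obtain ⟨m, rfl⟩ := (hcomm k).1 hk.eq.symm
    refine mul_mem (zpow_mem haX i) ?_
    simp only [pow_mul]
    exact pow_mem hbX m
  have hXa : Subgroup.centralizer (Subgroup.zpowers a : Set G) = X :=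
    le_antisymm hle (habel.trans hanti)
  refine ⟨?_, ?_, le_antisymm (hanti.trans hle) habel, hXa⟩
  · rw [← hXa]
    infer_instance
  · intro x hx y hy
    exact Subgroup.mem_centralizer_iff.1 (habel hy) x hx
end

section
/- Let ψ be a faithful 1-dimensional complex representation of the subgroup X. Then the p^r conjugate representations ^{b^k}ψ for k = 0, 1, …, p^r − 1, defined by (^{b^k}ψ)(h) = ψ(b^k h b^{−k}) for h ∈ X, are pairwise distinct. -/
/-! Conjugation by `b ^ k` sends `a` to `a ^ (j ^ k)`. If the conjugates of `ψ` by `b ^ k` and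
`b ^ l` agree, evaluating them at `a` and using the faithfulness of `ψ` gives
`a ^ (j ^ k) = a ^ (j ^ l)`, that is, `j ^ k = j ^ l` in `ZMod q`. The powers of `j` with exponent
below its order `p ^ r` are distinct, so `k = l`. -/

theorem conj_pow_eq_pow_pow {G : Type*} [Group G] {a b : G} {j : ℕ}
    (hba : b * a * b⁻¹ = a ^ j) (k : ℕ) : b ^ k * a * (b ^ k)⁻¹ = a ^ j ^ k := by
  induction k with
  | zero => simp
  | succ k ih =>
    calc b ^ (k + 1) * a * (b ^ (k + 1))⁻¹
        = b * (b ^ k * a * (b ^ k)⁻¹) * b⁻¹ := by rw [pow_succ']; group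
      _ = (b * a * b⁻¹) ^ j ^ k := by rw [ih, conj_pow]
      _ = a ^ j ^ (k + 1) := by rw [hba, ← pow_mul, pow_succ']

/-- The `IsOfFinOrder` hypothesis makes `x` a unit, so no cancellation law is needed. -/
theorem pow_injOn_of_isOfFinOrder {M : Type*} [Monoid M] {x : M} (hx : IsOfFinOrder x) :
    (Set.Iio (orderOf x)).InjOn (x ^ ·) := by
  obtain ⟨u, rfl⟩ := hx.isUnit
  intro k hk l hl h
  rw [orderOf_units] at hk hl
  exact pow_injOn_Iio_orderOf hk hl (Units.ext (by simpa using h))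


/-- Let `p, q` be distinct odd primes, `G = C_q ⋊ C_{p^n}` non-abelian
(presented by `a, b` with `a^q = b^{p^n} = 1`, `b a b⁻¹ = a^j`, `j` of order `p^r` mod `q`),
and let `X = ⟨a, b^{p^r}⟩`, which is normal in `G`.  If `ψ` is a faithful one-dimensional
complex representation of `X`, then the `p^r` conjugate representations `^{b^k}ψ`,
`h ↦ ψ(b^k h b^{-k})` for `0 ≤ k < p^r`, are pairwise distinct. -/
theorem conjugate_characters_distinct
    (p q n r : ℕ) (hp : p.Prime) (hq : q.Prime) (hpodd : Odd p) (hqodd : Odd q)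
    (hpq : p ≠ q) (hn : 1 ≤ n) (hr0 : 0 < r) (hrn : r ≤ n) (hrdvd : p ^ r ∣ q - 1)
    (G : Type) [Group G] [Fintype G] (a b : G) (j : ℕ)
    (ha : orderOf a = q) (hb : orderOf b = p ^ n)
    (hba : b * a * b⁻¹ = a ^ j) (hj : orderOf (j : ZMod q) = p ^ r)
    (hgen : Subgroup.closure {a, b} = ⊤)
    (hnorm : (Subgroup.closure {a, b ^ p ^ r} : Subgroup G).Normal)
    (ψ : (Subgroup.closure {a, b ^ p ^ r} : Subgroup G) →* ℂˣ)
    (hψ : Function.Injective ψ) :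
    ∀ k l : ℕ, k < p ^ r → l < p ^ r → k ≠ l →
      (fun h : (Subgroup.closure {a, b ^ p ^ r} : Subgroup G) =>
          ψ ⟨b ^ k * ↑h * (b ^ k)⁻¹, hnorm.conj_mem ↑h h.2 (b ^ k)⟩) ≠
        (fun h : (Subgroup.closure {a, b ^ p ^ r} : Subgroup G) =>
          ψ ⟨b ^ l * ↑h * (b ^ l)⁻¹, hnorm.conj_mem ↑h h.2 (b ^ l)⟩) := by
  intro k l hk hl hkl h
  have ha_mem : a ∈ Subgroup.closure {a, b ^ p ^ r} := Subgroup.subset_closure (by simp)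
  have h_conj : b ^ k * a * (b ^ k)⁻¹ = b ^ l * a * (b ^ l)⁻¹ :=
    congrArg Subtype.val (hψ (congrFun h ⟨a, ha_mem⟩))
  rw [conj_pow_eq_pow_pow hba, conj_pow_eq_pow_pow hba, pow_eq_pow_iff_modEq, ha,
    ← ZMod.natCast_eq_natCast_iff] at h_conj
  have hj_fin : IsOfFinOrder (j : ZMod q) :=
    orderOf_pos_iff.mp (hj ▸ pow_pos hp.pos r)
  exact hkl (pow_injOn_of_isOfFinOrder hj_fin (hj ▸ hk) (hj ▸ hl) (by simpa using h_conj))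
end

section
/- Let Q_8 be the quaternion group of order 8 and let τ be its unique 2-dimensional irreducible complex representation. Then for every finite-dimensional representation σ of Q_8 over ℚ, the multiplicity ⟨ℂ ⊗_ℚ σ, τ⟩ of τ in the complexification of σ is even; moreover, there exists a 4-dimensional representation of Q_8 over ℚ whose complexification is isomorphic to τ ⊕ τ. -/
/-! The central element `z = a 2` of `Q_8` satisfies `g² = z` for every non-central `g`, and
`h * g * h⁻¹ = z * g` for a suitable `h`.

By Schur's lemma `τ(z)` is a scalar `c` with `c² = 1`. If `c = 1`, then all `τ(g)` commute, so
they are scalars too, and the norm of the character of `τ` is `4` instead of `1`. Hence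
`τ(z) = -1`, and conjugating `g` to `z * g` shows that the character of `τ` is `2` at `1`, `-2` at
`z` and `0` elsewhere (`char_tau`).

Consequently, for a rational representation `σ`, the inner product in question is
`(tr σ(1) - tr σ(z)) / 4`, which is half the dimension of the `(-1)`-eigenspace of `σ(z)`. On that
eigenspace `a 1` and `xa 0` act as anticommuting square roots of `-1`, so it is a vector space
over the division ring `ℍ[ℚ]`, and its rational dimension is divisible by `4`
(`four_dvd_finrank`). The representation of dimension `4` is the action of `Q_8` on `ℍ[ℚ]` by left
multiplication, written in the basis `1, i, j, k`. -/

open CategoryTheory Finset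

namespace QuaternionSchurIndex

open Quaternion QuaternionGroup

section Group

/-- The central involution of `Q_8`. -/
abbrev z : QuaternionGroup 2 := a 2

lemma z_mul_z : z * z = 1 := by decide

lemma z_comm (g : QuaternionGroup 2) : g * z = z * g := by decide +revert

lemma exists_conj (g : QuaternionGroup 2) (h1 : g ≠ 1) (hz : g ≠ z) :
    ∃ h, h * g * h⁻¹ = z * g := by decide +revert

/-- Commutators in `Q_8` lie in the centre `{1, z}`. -/
lemma comm_or (g h : QuaternionGroup 2) : g * h = h * g ∨ g * h = z * (h * g) := by
  decide +revert

end Group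

section Complex

variable (τ : FDRep ℂ (QuaternionGroup 2)) [Simple τ]

/-- Schur's lemma for a group element which acts centrally. -/
lemma exists_scalar (g : QuaternionGroup 2) (hg : ∀ h, τ.ρ g * τ.ρ h = τ.ρ h * τ.ρ g) :
    ∃ c : ℂ, τ.ρ g = c • (1 : Module.End ℂ τ) := by
  let f : τ ⟶ τ := ⟨InducedCategory.homMk (ModuleCat.ofHom (τ.ρ g)), fun h => by
    ext v
    exact LinearMap.congr_fun (hg h) v⟩
  obtain ⟨c, hc⟩ := endomorphism_simple_eq_smul_id ℂ f
  refine ⟨c, ?_⟩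
  ext v
  have h := congrArg (fun k : τ ⟶ τ => k.hom.hom.hom v) hc
  exact h.symm

/-- The centre acts faithfully: otherwise `τ` would factor through an abelian group. -/
lemma rho_z (hdim : Module.finrank ℂ τ = 2) : τ.ρ z = -1 := by
  have hcomm (h) : τ.ρ z * τ.ρ h = τ.ρ h * τ.ρ z := by rw [← map_mul, ← map_mul, z_comm]
  obtain ⟨c, hc⟩ := exists_scalar τ z hcomm
  have hne : (1 : Module.End ℂ τ) ≠ 0 := by
    intro h
    have := congrArg (LinearMap.trace ℂ τ) h
    simp [LinearMap.trace_one, hdim] at this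
  have hsq : (c * c) • (1 : Module.End ℂ τ) = (1 : ℂ) • 1 := by
    have : τ.ρ z * τ.ρ z = 1 := by rw [← map_mul, z_mul_z, map_one]
    rw [hc] at this
    simpa [smul_smul] using this
  rcases mul_self_eq_one_iff.mp (smul_left_injective ℂ hne hsq) with rfl | rfl
  · exfalso
    rw [one_smul] at hc
    have hall (g) : ∃ c : ℂ, τ.ρ g = c • (1 : Module.End ℂ τ) := by
      refine exists_scalar τ g fun h => ?_
      rw [← map_mul, ← map_mul]
      rcases comm_or g h with e | e
      · rw [e]
      · rw [e, map_mul, hc, one_mul]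
    have hchar (g) : τ.character g * τ.character g⁻¹ = 4 := by
      obtain ⟨c, hc⟩ := hall g
      obtain ⟨d, hd⟩ := hall g⁻¹
      have hcd : (c * d) • (1 : Module.End ℂ τ) = (1 : ℂ) • 1 := by
        have : τ.ρ g * τ.ρ g⁻¹ = 1 := by rw [← map_mul, mul_inv_cancel, map_one]
        rw [hc, hd] at this
        simpa [smul_smul, mul_comm] using this
      have hcd' : c * d = 1 := smul_left_injective ℂ hne hcd
      simp only [FDRep.character, hc, hd, map_smul, LinearMap.trace_one, hdim, smul_eq_mul]
      push_cast
      linear_combination 4 * hcd'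
    have hcard : Nat.card (QuaternionGroup 2) = 8 := by
      rw [Nat.card_eq_fintype_card, QuaternionGroup.card]
    have : Invertible (Nat.card (QuaternionGroup 2) : ℂ) :=
      invertibleOfNonzero (by rw [hcard]; norm_num)
    have horth := FDRep.char_orthonormal τ τ
    rw [if_pos ⟨Iso.refl τ⟩, Finset.sum_congr rfl fun g _ => hchar g, hcard] at horth
    simp [QuaternionGroup.card] at horth
  · rw [hc, neg_smul, one_smul]

/-- The character of the two-dimensional irreducible representation of `Q_8`. -/
lemma char_tau (hdim : Module.finrank ℂ τ = 2) (g : QuaternionGroup 2) :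
    τ.character g = if g = 1 then 2 else if g = z then -2 else 0 := by
  have hz := rho_z τ hdim
  split_ifs with h1 h2
  · simp [h1, hdim]
  · simp [h2, FDRep.character, hz, LinearMap.trace_one, hdim]
  · obtain ⟨h, hh⟩ := exists_conj g h1 h2
    have hneg : τ.character (z * g) = -τ.character g := by
      simp [FDRep.character, hz]
    have := τ.char_conj g h
    rw [hh, hneg] at this
    linear_combination -(1 / 2 : ℂ) * this

end Complex

section Rational

variable {V : Type*} [AddCommGroup V] [Module ℚ V]

/-- Anticommuting square roots of `-1` on a rational vector space make it an `ℍ[ℚ]`-module, and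
`ℍ[ℚ]` is a division ring of dimension `4`. -/
lemma four_dvd_finrank (I J : Module.End ℚ V) (hI : I * I = -1) (hJ : J * J = -1)
    (hIJ : J * I = -(I * J)) : 4 ∣ Module.finrank ℚ V := by
  let q : QuaternionAlgebra.Basis (Module.End ℚ V) (-1 : ℚ) 0 (-1) :=
    { i := I, j := J, k := I * J
      i_mul_i := by simp [hI]
      j_mul_j := by simp [hJ]
      i_mul_j := rfl
      j_mul_i := by simp [hIJ] }
  let F : ℍ[ℚ] →ₐ[ℚ] Module.End ℚ V := q.liftHom
  let : Module ℍ[ℚ] V := Module.compHom V F.toRingHom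
  have : IsScalarTower ℚ ℍ[ℚ] V := ⟨fun r x v => by
    change F (r • x) v = r • F x v
    rw [map_smul, LinearMap.smul_apply]⟩
  rw [← Module.finrank_mul_finrank ℚ ℍ[ℚ] V, Quaternion.finrank_eq_four]
  exact dvd_mul_right _ _

/-- The left-hand side is twice the dimension of the `(-1)`-eigenspace of `ρ z`, and this dimension is
divisible by `4` by `four_dvd_finrank`. -/
lemma trace_sub_trace [FiniteDimensional ℚ V] (ρ : Representation ℚ (QuaternionGroup 2) V) :
    ∃ m : ℕ, LinearMap.trace ℚ V (ρ 1) - LinearMap.trace ℚ V (ρ z) = 8 * m := by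
  let W : Submodule ℚ V := LinearMap.ker (1 + ρ z)
  have hW (v : V) : v ∈ W ↔ ρ z v = -v := by
    rw [LinearMap.mem_ker, LinearMap.add_apply, Module.End.one_apply, add_eq_zero_iff_neg_eq,
      eq_comm]
  have hstab (g) : ∀ v ∈ W, ρ g v ∈ W := by
    intro v hv
    rw [hW] at hv ⊢
    rw [← Module.End.mul_apply, ← map_mul, ← z_comm, map_mul, Module.End.mul_apply, hv, map_neg]
  have hmul {g h k : QuaternionGroup 2} (e : g * h = z * k) (v : V) (hv : v ∈ W) :
      ρ g (ρ h v) = -ρ k v := by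
    rw [← Module.End.mul_apply, ← map_mul, e, map_mul, Module.End.mul_apply]
    exact (hW _).mp (hstab k v hv)
  have h4 : 4 ∣ Module.finrank ℚ W := by
    refine four_dvd_finrank ((ρ (a 1)).restrict (hstab _)) ((ρ (xa 0)).restrict (hstab _)) ?_ ?_ ?_
    · ext v
      simpa using hmul (show a 1 * a 1 = z * 1 by decide) v v.2
    · ext v
      simpa using hmul (show xa 0 * xa 0 = z * 1 by decide) v v.2
    · ext v
      have := hmul (show xa 0 * a 1 = z * (a 1 * xa 0) by decide) v v.2
      rw [map_mul] at this
      exact this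
  obtain ⟨m, hm⟩ := h4
  have hz2 (v : V) : ρ z (ρ z v) = v := by
    rw [← Module.End.mul_apply, ← map_mul, z_mul_z, map_one, Module.End.one_apply]
  -- `(1 - ρ z) / 2` is the projection onto the `(-1)`-eigenspace of `ρ z`.
  have hproj : LinearMap.IsProj W ((1 / 2 : ℚ) • (1 - ρ z)) := by
    refine ⟨fun v => ?_, fun v hv => ?_⟩
    · rw [hW]
      simp [hz2, ← smul_neg]
    · rw [hW] at hv
      simp only [LinearMap.smul_apply, LinearMap.sub_apply, Module.End.one_apply, hv]
      module
  have htr := hproj.trace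
  refine ⟨m, ?_⟩
  rw [hm, map_smul, map_sub, smul_eq_mul] at htr
  push_cast at htr
  rw [map_one]
  linear_combination 2 * htr

end Rational

section Existence

/-- Left multiplication by an element of `Q_8` on the integral quaternions, in the basis
`1, i, j, k`, where `a m` corresponds to `i ^ m` and `xa m` to `j * i ^ m`. -/
def leftMulFun : QuaternionGroup 2 → Matrix (Fin 4) (Fin 4) ℤ
  | .a m => !![0, -1, 0, 0; 1, 0, 0, 0; 0, 0, 0, -1; 0, 0, 1, 0] ^ m.val
  | .xa m => !![0, 0, -1, 0; 0, 0, 0, 1; 1, 0, 0, 0; 0, -1, 0, 0] *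
      !![0, -1, 0, 0; 1, 0, 0, 0; 0, 0, 0, -1; 0, 0, 1, 0] ^ m.val

/-- `leftMulFun` as a homomorphism; the group law is checked on all pairs of elements. -/
def leftMul : QuaternionGroup 2 →* Matrix (Fin 4) (Fin 4) ℤ where
  toFun := leftMulFun
  map_one' := by decide +kernel
  map_mul' := by decide +kernel

lemma trace_leftMul (g : QuaternionGroup 2) :
    (leftMul g).trace = if g = 1 then 4 else if g = z then -4 else 0 := by
  decide +kernel +revert

/-- The rational representation of `Q_8` on `ℍ[ℚ] ≃ ℚ⁴` by left multiplication. -/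
noncomputable def leftMulRep : Representation ℚ (QuaternionGroup 2) (Fin 4 → ℚ) :=
  (Matrix.toLinAlgEquiv' : Matrix (Fin 4) (Fin 4) ℚ ≃ₐ[ℚ] _).toAlgHom.toRingHom.toMonoidHom.comp
    ((Int.castRingHom ℚ).mapMatrix.toMonoidHom.comp leftMul)

lemma trace_leftMulRep (g : QuaternionGroup 2) :
    LinearMap.trace ℚ _ (leftMulRep g) = if g = 1 then 4 else if g = z then -4 else 0 := by
  have : leftMulRep g = Matrix.toLin' ((Int.castRingHom ℚ).mapMatrix (leftMul g)) := rfl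
  rw [this, Matrix.trace_toLin'_eq]
  have h := AddMonoidHom.map_trace (Int.castRingHom ℚ) (leftMul g)
  rw [RingHom.mapMatrix_apply, ← h, trace_leftMul]
  split_ifs <;> simp

end Existence

end QuaternionSchurIndex

/-- Let `Q_8` be the quaternion group of order `8` (realised as
`QuaternionGroup 2`) and `τ` its unique `2`-dimensional irreducible complex representation.
Then for every finite-dimensional rational representation `σ` of `Q_8`, the multiplicity
`⟨ℂ ⊗_ℚ σ, τ⟩` (expressed via the character inner product) is even; moreover there is a
`4`-dimensional rational representation of `Q_8` whose complexification is isomorphic to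
`τ ⊕ τ` (expressed by equality of characters, which determines complex representations
up to isomorphism). -/
theorem quaternion_two_dim_schur_index_two
    (τ : FDRep ℂ (QuaternionGroup 2)) [Simple τ]
    (hdim : Module.finrank ℂ τ = 2) :
    (∀ σ : FDRep ℚ (QuaternionGroup 2), ∃ m : ℕ,
      (Fintype.card (QuaternionGroup 2) : ℂ)⁻¹ *
          ∑ g : QuaternionGroup 2, (σ.character g : ℂ) * (starRingEnd ℂ) (τ.character g) =
        (2 * m : ℕ)) ∧
    (∃ σ : FDRep ℚ (QuaternionGroup 2),
      Module.finrank ℚ σ = 4 ∧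
        ∀ g : QuaternionGroup 2, (σ.character g : ℂ) = 2 * τ.character g) := by
  have hχ := QuaternionSchurIndex.char_tau τ hdim
  constructor
  · intro σ
    obtain ⟨m, hm⟩ := QuaternionSchurIndex.trace_sub_trace σ.ρ
    refine ⟨m, ?_⟩
    have hm' : (σ.character 1 : ℂ) - σ.character QuaternionSchurIndex.z = 8 * m := by
      exact_mod_cast hm
    rw [Fintype.sum_eq_add (1 : QuaternionGroup 2) QuaternionSchurIndex.z (by decide) (by
      rintro g ⟨h1, h2⟩
      simp [hχ, h1, h2]), hχ, hχ, if_pos rfl, if_neg (by decide), if_pos rfl,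
      QuaternionGroup.card]
    simp only [map_neg, map_ofNat]
    push_cast
    linear_combination (1 / 4 : ℂ) * hm'
  · refine ⟨FDRep.of QuaternionSchurIndex.leftMulRep, ?_, fun g => ?_⟩
    · change Module.finrank ℚ (Fin 4 → ℚ) = 4
      simp
    · have : (FDRep.of QuaternionSchurIndex.leftMulRep).character g =
          LinearMap.trace ℚ _ (QuaternionSchurIndex.leftMulRep g) := rfl
      rw [this, QuaternionSchurIndex.trace_leftMulRep, hχ]
      split_ifs <;> norm_num
end
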